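/- arXiv:2412.02762 — 2 statements merged into one kernel-verified Lean document; each statement's English description precedes it below -/
import Mathlib

section
/- Let 0<β<1 and 0<s with 2s ≤ 1-β. Then there exist a periodic function u ∈ C^{2s/(1-β)}(ℝ) and a function f ∈ C^β(ℝ) such that (-Δ)^s u(x) = f(u(x)) for all x ∈ ℝ, and for every ε>0, ρ>0, u does not belong to C^{2s/(1-β)+ε}([-ρ,ρ]). -/
open MeasureTheory Filter Set

/-- The normalizing constant `c_s` of the fractional Laplacian. -/
noncomputable def fracLapCoef (s : ℝ) : ℝ :=
  s * (4 : ℝ) ^ s * Real.Gamma (1 / 2 + s) / (Real.sqrt Real.pi * Real.Gamma (1 - s))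

/-- `HasFracLapAt s u x L` means the principal value defining `(-Δ)^s u (x)`
exists and equals `L`. -/
def HasFracLapAt (s : ℝ) (u : ℝ → ℝ) (x L : ℝ) : Prop :=
  (∀ ε : ℝ, 0 < ε →
    MeasureTheory.IntegrableOn (fun y : ℝ => (u x - u y) / |x - y| ^ (1 + 2 * s))
      {y : ℝ | ε < |y - x|}) ∧
  Filter.Tendsto (fun ε : ℝ =>
      fracLapCoef s * ∫ y in {y : ℝ | ε < |y - x|}, (u x - u y) / |x - y| ^ (1 + 2 * s))
    (nhdsWithin 0 (Set.Ioi 0)) (nhds L)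

/-- `MemCalpha α Ω f` : `f ∈ C^α(Ω)`, i.e. `f` is continuously differentiable with bounded
derivatives up to order `⌊α⌋` on `Ω`, and its `⌊α⌋`-th derivative is Hölder continuous of
exponent `α - ⌊α⌋` on `Ω`. -/
def MemCalpha (α : ℝ) (Ω : Set ℝ) (f : ℝ → ℝ) : Prop :=
  ContDiffOn ℝ (⌊α⌋₊ : ℕ) f Ω ∧
  (∀ k : ℕ, k ≤ ⌊α⌋₊ → ∃ C : ℝ, ∀ x ∈ Ω, |iteratedDerivWithin k f Ω x| ≤ C) ∧
  ∃ C : NNReal, HolderOnWith C (α - (⌊α⌋₊ : ℝ)).toNNReal (iteratedDerivWithin ⌊α⌋₊ f Ω) Ω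

/-! Put `a = 2 * s / (1 - β) ≤ 1`, so that `β = (a - 2 * s) / a`. The function `u` is the primitive
of an odd, `π`-antiperiodic `v` which behaves near `0` like `|t| ^ (a - 1) / log (1 / |t|)`. The
logarithm leaves `u` in `C ^ a` but is beaten by every positive power, so `u` is in no smaller
Hölder class at `0`. To compare `(-Δ)^s u` at `x` and `y`, split the integrals at `|z| = δ`. The
near part is at most `C * δ ^ (a - 2 * s)` because `u` is `a`-Hölder. In the far part,
`u (y + z) - u (x + z)` is the integral of `v (t + z)` over `t` between `x` and `y`, and the bound
on the growth of `v (t + z)` relative to `v t` shows that this part is at most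
`C * (δ ^ (-2 * s) * |u x - u y| + δ ^ (a - 2 * s))`. Balancing the terms gives
`|(-Δ)^s u (x) - (-Δ)^s u (y)| ≤ C * |u x - u y| ^ ((a - 2 * s) / a)`. In particular `(-Δ)^s u` is
constant on the level sets of `u`, hence of the form `f ∘ u`, and the estimate says that `f` is
`β`-Hölder. -/

lemma holderOnWith_of_abs_sub_le {C γ : ℝ} {S : Set ℝ} {f : ℝ → ℝ} (hC : 0 ≤ C) (hγ : 0 ≤ γ)
    (h : ∀ x ∈ S, ∀ y ∈ S, |f x - f y| ≤ C * |x - y| ^ γ) :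
    HolderOnWith C.toNNReal γ.toNNReal f S := by
  intro x hx y hy
  rw [edist_dist, edist_dist, Real.dist_eq, Real.dist_eq, Real.coe_toNNReal _ hγ,
    ENNReal.ofReal_rpow_of_nonneg (abs_nonneg _) hγ, ← ENNReal.ofReal, ← ENNReal.ofReal_mul hC]
  exact ENNReal.ofReal_le_ofReal (h x hx y hy)

lemma abs_sub_le_of_holderOnWith {C : NNReal} {γ : ℝ} {S : Set ℝ} {f : ℝ → ℝ}
    (hf : HolderOnWith C γ.toNNReal f S) (hγ : 0 ≤ γ) {x y : ℝ} (hx : x ∈ S) (hy : y ∈ S) :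
    |f x - f y| ≤ C * |x - y| ^ γ := by
  simpa only [Real.dist_eq, Real.coe_toNNReal _ hγ] using hf.dist_le hx hy

lemma memCalpha_of_abs_sub_le {C M γ : ℝ} {S : Set ℝ} {f : ℝ → ℝ} (hC : 0 ≤ C) (hγ : 0 < γ)
    (hγ1 : γ < 1) (h : ∀ x ∈ S, ∀ y ∈ S, |f x - f y| ≤ C * |x - y| ^ γ)
    (hM : ∀ x ∈ S, |f x| ≤ M) : MemCalpha γ S f := by
  have hf := holderOnWith_of_abs_sub_le hC hγ.le h
  unfold MemCalpha
  rw [Nat.floor_eq_zero.2 hγ1, Nat.cast_zero, Nat.cast_zero, sub_zero,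
    iteratedDerivWithin_zero]
  refine ⟨contDiffOn_zero.2 (hf.continuousOn (Real.toNNReal_pos.2 hγ)), fun k hk => ?_, _, hf⟩
  rw [Nat.le_zero.1 hk, iteratedDerivWithin_zero]
  exact ⟨M, hM⟩

lemma memCalpha_one_of_hasDerivAt {M M' : ℝ} {f f' : ℝ → ℝ} (hf : ∀ x, HasDerivAt f (f' x) x)
    (hf' : Continuous f') (hM : ∀ x, |f x| ≤ M) (hM' : ∀ x, |f' x| ≤ M') :
    MemCalpha 1 univ f := by
  have hd : deriv f = f' := funext fun x => (hf x).deriv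
  have hi : iteratedDerivWithin 1 f univ = f' := by
    rw [iteratedDerivWithin_univ, iteratedDeriv_one, hd]
  have hM'0 : 0 ≤ M' := (abs_nonneg _).trans (hM' 0)
  unfold MemCalpha
  rw [Nat.floor_one, hi, Nat.cast_one, Nat.cast_one, sub_self]
  refine ⟨?_, fun k hk => ?_, _, holderOnWith_of_abs_sub_le (C := M' + M') (by positivity) le_rfl
    fun x _ y _ => ?_⟩
  · rw [contDiffOn_univ, contDiff_one_iff_deriv, hd]
    exact ⟨fun x => (hf x).differentiableAt, hf'⟩
  · obtain rfl | rfl : k = 0 ∨ k = 1 := by lia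
    · exact ⟨M, fun x _ => by simpa only [iteratedDerivWithin_zero] using hM x⟩
    · exact ⟨M', fun x _ => by simpa only [hi] using hM' x⟩
  · rw [Real.rpow_zero, mul_one]
    exact (abs_sub _ _).trans (add_le_add (hM' x) (hM' y))

lemma MemCalpha.exists_abs_sub_le {α : ℝ} {Ω : Set ℝ} {f : ℝ → ℝ} (hf : MemCalpha α Ω f)
    (hα : 0 ≤ α) (hΩ : Convex ℝ Ω) :
    ∃ K : ℝ, ∀ x ∈ Ω, ∀ y ∈ Ω, |f x - f y| ≤ K * |x - y| ^ min α 1 := by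
  obtain ⟨hcd, hbd, C, hC⟩ := hf
  rcases lt_or_ge α 1 with h1 | h1
  · rw [Nat.floor_eq_zero.2 h1, iteratedDerivWithin_zero, Nat.cast_zero, sub_zero] at hC
    rw [min_eq_left h1.le]
    exact ⟨C, fun x hx y hy => abs_sub_le_of_holderOnWith hC hα hx hy⟩
  · obtain ⟨K, hK⟩ := hbd 1 (Nat.floor_pos.2 h1)
    have hdiff : DifferentiableOn ℝ f Ω :=
      hcd.differentiableOn (by exact_mod_cast (Nat.floor_pos.2 h1).ne')
    rw [min_eq_right h1]
    refine ⟨K, fun x hx y hy => ?_⟩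
    rw [Real.rpow_one]
    exact hΩ.norm_image_sub_le_of_norm_derivWithin_le hdiff
      (by simpa only [iteratedDerivWithin_one, Real.norm_eq_abs] using hK) hy hx

lemma MemCalpha.derivWithin {α : ℝ} {Ω : Set ℝ} {f : ℝ → ℝ} (hf : MemCalpha α Ω f)
    (hα : 1 ≤ α) (hΩ : UniqueDiffOn ℝ Ω) : MemCalpha (α - 1) Ω (derivWithin f Ω) := by
  obtain ⟨hcd, hbd, C, hC⟩ := hf
  obtain ⟨n, hn⟩ : ∃ n, ⌊α⌋₊ = n + 1 := Nat.exists_eq_succ_of_ne_zero (Nat.floor_pos.2 hα).ne'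
  have hn' : ⌊α - 1⌋₊ = n := by rw [Nat.floor_sub_one, hn, Nat.add_sub_cancel]
  rw [hn, iteratedDerivWithin_succ', Nat.cast_succ, add_comm (n : ℝ), ← sub_sub] at hC
  rw [hn, Nat.cast_succ] at hcd
  unfold MemCalpha
  rw [hn']
  refine ⟨((contDiffOn_succ_iff_derivWithin hΩ).1 hcd).2.2, fun k hk => ?_, C, hC⟩
  rw [← iteratedDerivWithin_succ']
  exact hbd (k + 1) (by lia)

-- `f` is `w` composed with a right inverse of `u`, extended by the nearest-point projection.
lemma exists_memCalpha_factor {u w : ℝ → ℝ} {m M C γ : ℝ} (hu : range u = Icc m M) (hC : 0 ≤ C)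
    (hγ : 0 < γ) (hγ1 : γ < 1) (h : ∀ x y, |w x - w y| ≤ C * |u x - u y| ^ γ) :
    ∃ f, MemCalpha γ univ f ∧ ∀ x, f (u x) = w x := by
  have hmem : ∀ x, u x ∈ Icc m M := fun x => hu ▸ mem_range_self x
  have hmM : m ≤ M := (hmem 0).1.trans (hmem 0).2
  choose X hX using fun t : Icc m M => (hu.symm ▸ t.2 : (t : ℝ) ∈ range u)
  have hdist : ∀ x t, |w (X (projIcc m M hmM t)) - w x| ≤ C * |projIcc m M hmM t - u x| ^ γ :=
    fun x t => by simpa only [hX] using h (X (projIcc m M hmM t)) x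
  refine ⟨fun t => w (X (projIcc m M hmM t)),
    memCalpha_of_abs_sub_le (M := |w 0| + C * (M - m) ^ γ) hC hγ hγ1
      (fun t _ t' _ => ?_) (fun t _ => ?_), fun x => ?_⟩
  · refine (hdist _ t).trans ?_
    rw [hX]
    exact mul_le_mul_of_nonneg_left
      (Real.rpow_le_rpow (abs_nonneg _) (abs_projIcc_sub_projIcc hmM) hγ.le) hC
  · have hle : |(projIcc m M hmM t : ℝ) - u 0| ≤ M - m :=
      abs_sub_le_of_le_of_le (projIcc m M hmM t).2.1 (projIcc m M hmM t).2.2 (hmem 0).1 (hmem 0).2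
    have h1 := hdist 0 t
    have h2 : C * |(projIcc m M hmM t : ℝ) - u 0| ^ γ ≤ C * (M - m) ^ γ := by gcongr
    linarith [abs_sub_abs_le_abs_sub (w (X (projIcc m M hmM t))) (w 0)]
  · have h1 := hdist x (u x)
    rw [projIcc_of_mem hmM (hmem x), sub_self, abs_zero, Real.zero_rpow hγ.ne', mul_zero] at h1
    simp only [projIcc_of_mem hmM (hmem x)]
    exact sub_eq_zero.1 (abs_nonpos_iff.1 h1)

lemma not_forall_mul_rpow_le_mul_rpow {c p q ρ : ℝ} (C : ℝ) (hc : 0 < c) (hpq : p < q)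
    (hρ : 0 < ρ) : ¬ ∀ x, 0 < x → x ≤ ρ → c * x ^ p ≤ C * x ^ q := by
  intro h
  have hlim : Tendsto (fun x : ℝ => C * x ^ (q - p)) (nhdsWithin 0 (Ioi 0)) (nhds 0) := by
    have := ((Real.continuousAt_rpow_const 0 (q - p) (Or.inr (sub_nonneg.2 hpq.le))).const_mul
      C).tendsto.mono_left (nhdsWithin_le_nhds (s := Ioi 0))
    rwa [Real.zero_rpow (sub_pos.2 hpq).ne', mul_zero] at this
  obtain ⟨x, hx, hx0, hxρ⟩ := ((hlim.eventually_lt_const hc).and (Ioo_mem_nhdsGT hρ)).exists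
  refine hx.not_ge (le_of_mul_le_mul_right ?_ (Real.rpow_pos_of_pos hx0 p))
  rw [mul_assoc, ← Real.rpow_add hx0, sub_add_cancel]
  exact h x hx0 hxρ.le

lemma not_memCalpha_of_mul_rpow_le {α b r ρ : ℝ} {f : ℝ → ℝ} (hα : 0 ≤ α) (hb : b < min α 1)
    (hr : 0 < r) (hrρ : r ≤ ρ) (hf0 : f 0 = 0)
    (h : ∀ η, 0 < η → ∃ c, 0 < c ∧ ∀ x, 0 < x → x ≤ r → c * x ^ (b + η) ≤ f x) :
    ¬ MemCalpha α (Icc (-ρ) ρ) f := by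
  intro hf
  obtain ⟨K, hK⟩ := hf.exists_abs_sub_le hα (convex_Icc _ _)
  obtain ⟨η, hη, hbη⟩ : ∃ η, 0 < η ∧ b + η < min α 1 :=
    ⟨(min α 1 - b) / 2, by linarith, by linarith⟩
  obtain ⟨c, hc, hle⟩ := h η hη
  refine not_forall_mul_rpow_le_mul_rpow K hc hbη hr fun x hx hxr => ?_
  have hxK := hK x ⟨by linarith, hxr.trans hrρ⟩ 0 ⟨by linarith, by linarith⟩
  rw [hf0, sub_zero, sub_zero, abs_of_pos hx] at hxK
  exact (hle x hx hxr).trans ((le_abs_self _).trans hxK)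

section Integrals

open Metric Real

lemma lintegral_comp_abs (F : ℝ → ENNReal) : ∫⁻ z, F |z| = 2 * ∫⁻ z in Ioi (0 : ℝ), F z := by
  have hpos : ∫⁻ z in Ioi (0 : ℝ), F |z| = ∫⁻ z in Ioi (0 : ℝ), F z :=
    setLIntegral_congr_fun measurableSet_Ioi fun z hz => by rw [abs_of_pos hz]
  have hneg := (Measure.measurePreserving_neg (volume : Measure ℝ)).setLIntegral_comp_preimage_emb
    (MeasurableEquiv.neg ℝ).measurableEmbedding (fun z => F |z|) (Ici 0)
  simp only [neg_preimage, neg_Ici, neg_zero, abs_neg] at hneg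
  rw [← lintegral_add_compl (fun z => F |z|) (measurableSet_Ioi (a := (0 : ℝ))), compl_Ioi, hneg,
    setLIntegral_congr Ioi_ae_eq_Ici.symm, hpos, two_mul]

lemma setLIntegral_preimage_abs {S : Set ℝ} (hS : MeasurableSet S) (F : ℝ → ENNReal) :
    ∫⁻ z in (|·|) ⁻¹' S, F |z| = 2 * ∫⁻ z in S ∩ Ioi 0, F z := by
  rw [← lintegral_indicator (measurableSet_preimage (by fun_prop) hS),
    ← Measure.restrict_restrict hS, ← lintegral_indicator hS, ← lintegral_comp_abs]
  rfl

lemma preimage_abs_Iic (r : ℝ) : (|·|) ⁻¹' Iic r = closedBall (0 : ℝ) r := by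
  ext z
  simp only [mem_preimage, mem_Iic, mem_closedBall_zero_iff, norm_eq_abs]

lemma lintegral_closedBall_rpow {τ r : ℝ} (hτ : 0 < τ) (hr : 0 ≤ r) :
    ∫⁻ z in closedBall (0 : ℝ) r, ENNReal.ofReal (|z| ^ (τ - 1)) =
      ENNReal.ofReal (2 * (r ^ τ / τ)) := by
  have hint : IntervalIntegrable (fun z : ℝ => z ^ (τ - 1)) volume 0 r :=
    intervalIntegral.intervalIntegrable_rpow' (by linarith)
  rw [← preimage_abs_Iic,
    setLIntegral_preimage_abs measurableSet_Iic (fun z => ENNReal.ofReal (z ^ (τ - 1))),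
    inter_comm, Ioi_inter_Iic, ← ofReal_integral_eq_lintegral_ofReal
      ((intervalIntegrable_iff_integrableOn_Ioc_of_le hr).1 hint)
      ((ae_restrict_mem measurableSet_Ioc).mono fun z hz => rpow_nonneg hz.1.le _),
    ← intervalIntegral.integral_of_le hr, integral_rpow (Or.inl (by linarith)), sub_add_cancel,
    zero_rpow hτ.ne', sub_zero, ENNReal.ofReal_mul zero_le_two, ENNReal.ofReal_ofNat]

lemma lintegral_compl_closedBall_rpow {σ r : ℝ} (hσ : 0 < σ) (hr : 0 < r) :
    ∫⁻ z in (closedBall (0 : ℝ) r)ᶜ, ENNReal.ofReal (|z| ^ (-(1 + σ))) =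
      ENNReal.ofReal (2 * (r ^ (-σ) / σ)) := by
  rw [← preimage_abs_Iic, ← preimage_compl, compl_Iic,
    setLIntegral_preimage_abs measurableSet_Ioi (fun z => ENNReal.ofReal (z ^ (-(1 + σ)))),
    Ioi_inter_Ioi, sup_eq_left.2 hr.le, ← ofReal_integral_eq_lintegral_ofReal
      (integrableOn_Ioi_rpow_of_lt (by linarith) hr)
      ((ae_restrict_mem measurableSet_Ioi).mono fun z hz => rpow_nonneg (hr.trans hz).le _),
    integral_Ioi_rpow_of_lt (by linarith) hr, show -(1 + σ) + 1 = -σ by ring, neg_div_neg_eq,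
    ENNReal.ofReal_mul zero_le_two, ENNReal.ofReal_ofNat]

variable {f : ℝ → ENNReal} {k : ℝ → ENNReal} {T : ℝ}

lemma lintegral_Ioc_comp_add_of_periodic (hf : Function.Periodic f T) (hT : 0 < T) (t r : ℝ) :
    ∫⁻ z in Ioc r (r + T), f (t + z) = ∫⁻ z in Ioc 0 T, f z := by
  have : VAddInvariantMeasure (AddSubgroup.zmultiples T) ℝ volume :=
    ⟨fun c s _ => measure_preimage_add _ _ _⟩
  have hfund := (isAddFundamentalDomain_Ioc hT (t + r)).setLIntegral_eq
    (isAddFundamentalDomain_Ioc hT 0) f hf.map_vadd_zmultiples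
  have hshift := (measurePreserving_add_left volume t).setLIntegral_comp_preimage_emb
    (measurableEmbedding_addLeft t) f (Ioc (t + r) (t + r + T))
  rwa [preimage_const_add_Ioc, add_sub_cancel_left, add_assoc, add_sub_cancel_left, ← add_assoc,
    hfund, zero_add] at hshift

lemma iUnion_Ioc_add_natCast_mul (hT : 0 < T) (r : ℝ) :
    ⋃ n : ℕ, Ioc (r + n * T) (r + n * T + T) = Ioi r := by
  have h := iUnion_Ioc_map_succ_eq_Ioi (f := fun n : ℕ => r + n * T)
    (fun n => by simp only [Nat.bot_eq_zero, Nat.cast_zero]; gcongr; exact n.cast_nonneg)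
    (not_bddAbove_of_tendsto_atTop (tendsto_atTop_add_const_left _ r
      (tendsto_natCast_atTop_atTop.atTop_mul_const hT)))
  simpa only [Nat.succ_eq_succ, Nat.cast_succ, add_mul, one_mul, ← add_assoc, Nat.bot_eq_zero,
    Nat.cast_zero, zero_mul, add_zero] using h

lemma lintegral_Ioi_comp_add_mul_le (hf : Function.Periodic f T) (hfm : Measurable f)
    (hT : 0 < T) {r : ℝ} (hk : AntitoneOn k (Ici r)) (t : ℝ) :
    ∫⁻ z in Ioi r, f (t + z) * k z ≤ (∫⁻ z in Ioc 0 T, f z) * ∑' n : ℕ, k (r + n * T) := by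
  calc ∫⁻ z in Ioi r, f (t + z) * k z
      ≤ ∑' n : ℕ, ∫⁻ z in Ioc (r + n * T) (r + n * T + T), f (t + z) * k z := by
        rw [← iUnion_Ioc_add_natCast_mul hT r]
        exact lintegral_iUnion_le _ _
    _ ≤ ∑' n : ℕ, ∫⁻ z in Ioc (r + n * T) (r + n * T + T), f (t + z) * k (r + n * T) := by
        refine ENNReal.tsum_le_tsum fun n => setLIntegral_mono' measurableSet_Ioc fun z hz => ?_
        have hn : r ≤ r + n * T := le_add_of_nonneg_right (by positivity)
        gcongr
        exact hk hn (hn.trans hz.1.le) hz.1.le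
    _ = (∫⁻ z in Ioc 0 T, f z) * ∑' n : ℕ, k (r + n * T) := by
        rw [← ENNReal.tsum_mul_left]
        refine tsum_congr fun n => ?_
        rw [lintegral_mul_const _ (by fun_prop),
          lintegral_Ioc_comp_add_of_periodic hf hT]

lemma lintegral_compl_closedBall_comp_add_mul_le (hf : Function.Periodic f T)
    (hfm : Measurable f) (hfe : Function.Even f) (hT : 0 < T) {r : ℝ}
    (hr : 0 ≤ r) (hk : AntitoneOn k (Ici r)) (t : ℝ) :
    ∫⁻ z in (closedBall 0 r)ᶜ, f (t + z) * k |z| ≤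
      2 * ((∫⁻ z in Ioc 0 T, f z) * ∑' n : ℕ, k (r + n * T)) := by
  have hset : (closedBall (0 : ℝ) r)ᶜ = Ioi r ∪ Neg.neg ⁻¹' Ioi r := by
    ext z
    simp only [mem_compl_iff, mem_closedBall_zero_iff, not_le, norm_eq_abs, lt_abs, mem_union,
      mem_preimage, mem_Ioi]
  have hneg := (Measure.measurePreserving_neg (volume : Measure ℝ)).setLIntegral_comp_preimage_emb
    (MeasurableEquiv.neg ℝ).measurableEmbedding (fun z => f (-t + z) * k |z|) (Ioi r)
  have hpos : ∀ t, ∫⁻ z in Ioi r, f (t + z) * k |z| ≤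
      (∫⁻ z in Ioc 0 T, f z) * ∑' n : ℕ, k (r + n * T) := fun t =>
    (setLIntegral_congr_fun measurableSet_Ioi fun z hz => by
      rw [abs_of_nonneg (hr.trans (le_of_lt hz))]).trans_le
      (lintegral_Ioi_comp_add_mul_le hf hfm hT hk t)
  simp only [abs_neg, ← neg_add, hfe _] at hneg
  rw [hset, two_mul]
  exact (lintegral_union_le _ _ _).trans (add_le_add (hpos t) (hneg.trans_le (hpos (-t))))

lemma tsum_ofReal_rpow_ne_top {r p : ℝ} (hr : 0 < r) (hT : 0 < T) (hp : 1 < p) :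
    ∑' n : ℕ, ENNReal.ofReal ((r + n * T) ^ (-p)) ≠ ⊤ := by
  refine Summable.tsum_ofReal_ne_top ?_
  have hsum := (Real.summable_one_div_nat_add_rpow (r / T) p).2 hp
  refine (hsum.mul_left (T ^ (-p))).congr fun n => ?_
  have hn : 0 < (n : ℝ) + r / T := by positivity
  rw [abs_of_pos hn, one_div, ← rpow_neg hn.le, ← mul_rpow hT.le hn.le, mul_add,
    mul_div_cancel₀ _ hT.ne', add_comm r, mul_comm T]

end Integrals

section RelativeGrowth

open Metric Real

variable {s a t : ℝ}

lemma ratio_rpow_mul_rpow_le (hs : 0 ≤ s) (hs1 : s ≤ 1) (ht : 0 < t) {z : ℝ} (hz : z ≠ 0) :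
    (|t + z| / t) ^ s * |z| ^ (-(1 + 2 * s)) ≤
      |z| ^ (-(1 + 2 * s)) + t ^ (-s) * |z| ^ (-(1 + s)) := by
  have hz' := abs_pos.2 hz
  have hratio : |t + z| / t ≤ 1 + |z| / t := by
    rw [← div_self ht.ne', ← add_div]
    gcongr
    simpa only [abs_of_pos ht] using abs_add_le t z
  calc (|t + z| / t) ^ s * |z| ^ (-(1 + 2 * s))
      ≤ (1 + (|z| / t) ^ s) * |z| ^ (-(1 + 2 * s)) := by
        gcongr
        refine (rpow_le_rpow (by positivity) hratio hs).trans ?_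
        simpa only [one_rpow] using rpow_add_le_add_rpow zero_le_one (by positivity) hs hs1
    _ = |z| ^ (-(1 + 2 * s)) + t ^ (-s) * (|z| ^ s * |z| ^ (-(1 + 2 * s))) := by
        rw [div_rpow hz'.le ht.le, rpow_neg ht.le]
        ring
    _ = |z| ^ (-(1 + 2 * s)) + t ^ (-s) * |z| ^ (-(1 + s)) := by
        rw [← rpow_add hz']
        ring_nf

lemma ratio_rpow_le_two (ha : 0 ≤ a) (ha1 : a ≤ 1) {r : ℝ} (hr : 1 / 2 ≤ r) : r ^ (a - 1) ≤ 2 := by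
  calc r ^ (a - 1) ≤ (1 / 2) ^ (a - 1) := rpow_le_rpow_of_nonpos (by norm_num) hr (by linarith)
    _ = 2 ^ (1 - a) := by rw [one_div, inv_rpow zero_le_two, ← rpow_neg zero_le_two, neg_sub]
    _ ≤ 2 ^ (1 : ℝ) := rpow_le_rpow_of_exponent_le one_le_two (by linarith)
    _ = 2 := rpow_one 2

lemma ratio_rpow_mul_rpow_le_of_abs_le (hs : 0 ≤ s) (hs1 : s ≤ 1) (ht : 0 < t) {z : ℝ}
    (hz : |t + z| ≤ t / 2) :
    (|t + z| / t) ^ (a - 1) * |z| ^ (-(1 + 2 * s)) ≤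
      8 * t ^ (-(2 * s + a)) * |t + z| ^ (a - 1) := by
  have hzt : t / 2 ≤ |z| := by linarith [le_abs_self (t + z), neg_abs_le z]
  have hpow : |z| ^ (-(1 + 2 * s)) ≤ 8 * t ^ (-(1 + 2 * s)) := by
    calc |z| ^ (-(1 + 2 * s)) ≤ (t / 2) ^ (-(1 + 2 * s)) :=
          rpow_le_rpow_of_nonpos (by positivity) hzt (by linarith)
      _ = 2 ^ (1 + 2 * s) * t ^ (-(1 + 2 * s)) := by
          rw [div_rpow ht.le zero_le_two, rpow_neg zero_le_two, div_inv_eq_mul, mul_comm]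
      _ ≤ 2 ^ (3 : ℝ) * t ^ (-(1 + 2 * s)) := by
          gcongr
          · exact one_le_two
          · linarith
      _ = 8 * t ^ (-(1 + 2 * s)) := by norm_num
  calc (|t + z| / t) ^ (a - 1) * |z| ^ (-(1 + 2 * s))
      ≤ (|t + z| / t) ^ (a - 1) * (8 * t ^ (-(1 + 2 * s))) := by gcongr
    _ = 8 * (t ^ (-(1 + 2 * s)) * t ^ (1 - a)) * |t + z| ^ (a - 1) := by
        rw [div_rpow (abs_nonneg _) ht.le, ← neg_sub a 1, rpow_neg ht.le (a - 1)]
        ring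
    _ = 8 * t ^ (-(2 * s + a)) * |t + z| ^ (a - 1) := by
        rw [← rpow_add ht]
        ring_nf

lemma ofReal_ratio_mul_rpow_le (hs : 0 ≤ s) (hs1 : s ≤ 1) (ha : 0 ≤ a) (ha1 : a ≤ 1) (ht : 0 < t)
    {z : ℝ} (hz : z ≠ 0) :
    ENNReal.ofReal (((|t + z| / t) ^ s + (|t + z| / t) ^ (a - 1)) * |z| ^ (-(1 + 2 * s))) ≤
      3 * ENNReal.ofReal (|z| ^ (-(1 + 2 * s))) +
      ENNReal.ofReal (t ^ (-s)) * ENNReal.ofReal (|z| ^ (-(1 + s))) +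
      ENNReal.ofReal (8 * t ^ (-(2 * s + a))) *
        (closedBall 0 (t / 2)).indicator (fun p => ENNReal.ofReal (|p| ^ (a - 1))) (t + z) := by
  have hfirst := ratio_rpow_mul_rpow_le hs hs1 ht hz
  rw [← ENNReal.ofReal_ofNat 3, ← ENNReal.ofReal_mul (by norm_num),
    ← ENNReal.ofReal_mul (by positivity), ← ENNReal.ofReal_add (by positivity) (by positivity)]
  by_cases hmem : t + z ∈ closedBall 0 (t / 2)
  · rw [indicator_of_mem hmem, ← ENNReal.ofReal_mul (by positivity),
      ← ENNReal.ofReal_add (by positivity) (by positivity)]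
    refine ENNReal.ofReal_le_ofReal ?_
    have hsecond := ratio_rpow_mul_rpow_le_of_abs_le (a := a) hs hs1 ht
      (mem_closedBall_zero_iff.1 hmem)
    have : 0 ≤ |z| ^ (-(1 + 2 * s)) := by positivity
    linarith
  · rw [indicator_of_notMem hmem, mul_zero, add_zero]
    refine ENNReal.ofReal_le_ofReal ?_
    rw [mem_closedBall_zero_iff, norm_eq_abs, not_le] at hmem
    have hhalf : 1 / 2 ≤ |t + z| / t := by
      rw [le_div_iff₀ ht]
      linarith
    have hsecond := mul_le_mul_of_nonneg_right (ratio_rpow_le_two ha ha1 hhalf)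
      (rpow_nonneg (abs_nonneg z) (-(1 + 2 * s)))
    linarith

lemma rpow_neg_mul_rpow_neg_le (s : ℝ) {x y : ℝ} (hx : 0 < x) (hy : 0 < y) :
    x ^ (-s) * y ^ (-s) ≤ x ^ (-(2 * s)) + y ^ (-(2 * s)) := by
  rw [two_mul, neg_add, rpow_add hx, rpow_add hy]
  nlinarith [sq_nonneg (x ^ (-s) - y ^ (-s)), rpow_pos_of_pos hx (-s), rpow_pos_of_pos hy (-s)]

lemma tail_bounds_add_le (hs : 0 < s) (ha : 0 < a) (ht : 0 < t) {δ : ℝ} (hδ : 0 < δ) :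
    3 * (2 * (δ ^ (-(2 * s)) / (2 * s))) + t ^ (-s) * (2 * (δ ^ (-s) / s)) +
        8 * t ^ (-(2 * s + a)) * (2 * (t ^ a / a)) ≤
      (5 / s + 16 / a) * (δ ^ (-(2 * s)) + t ^ (-(2 * s))) := by
  have hpow : t ^ (-(2 * s + a)) * t ^ a = t ^ (-(2 * s)) := by
    rw [← rpow_add ht]
    ring_nf
  calc _ = 3 / s * δ ^ (-(2 * s)) + 2 / s * (δ ^ (-s) * t ^ (-s)) +
        16 / a * (t ^ (-(2 * s + a)) * t ^ a) := by ring
    _ ≤ 3 / s * δ ^ (-(2 * s)) + 2 / s * (δ ^ (-(2 * s)) + t ^ (-(2 * s))) +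
        16 / a * t ^ (-(2 * s)) := by
      rw [hpow]
      gcongr
      exact rpow_neg_mul_rpow_neg_le s hδ ht
    _ = (5 / s + 16 / a) * (δ ^ (-(2 * s)) + t ^ (-(2 * s))) -
        (3 / s * t ^ (-(2 * s)) + 16 / a * δ ^ (-(2 * s))) := by ring
    _ ≤ _ := sub_le_self _ (by positivity)

lemma lintegral_compl_closedBall_ratio_mul_rpow_le (hs : 0 < s) (hs1 : s ≤ 1) (ha : 0 < a)
    (ha1 : a ≤ 1) (ht : 0 < t) {δ : ℝ} (hδ : 0 < δ) :
    ∫⁻ z in (closedBall 0 δ)ᶜ,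
        ENNReal.ofReal (((|t + z| / t) ^ s + (|t + z| / t) ^ (a - 1)) * |z| ^ (-(1 + 2 * s))) ≤
      ENNReal.ofReal ((5 / s + 16 / a) * (δ ^ (-(2 * s)) + t ^ (-(2 * s)))) := by
  set g : ℝ → ENNReal := (closedBall 0 (t / 2)).indicator fun p => ENNReal.ofReal (|p| ^ (a - 1))
  have hg : Measurable g := Measurable.indicator (by fun_prop) measurableSet_closedBall
  have hsingular : ∫⁻ z in (closedBall 0 δ)ᶜ, g (t + z) ≤ ENNReal.ofReal (2 * (t ^ a / a)) := by
    refine (setLIntegral_le_lintegral _ _).trans ?_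
    rw [lintegral_add_left_eq_self, lintegral_indicator measurableSet_closedBall,
      lintegral_closedBall_rpow ha (by positivity)]
    gcongr
    linarith
  calc _ ≤ ∫⁻ z in (closedBall 0 δ)ᶜ, (3 * ENNReal.ofReal (|z| ^ (-(1 + 2 * s))) +
        ENNReal.ofReal (t ^ (-s)) * ENNReal.ofReal (|z| ^ (-(1 + s))) +
        ENNReal.ofReal (8 * t ^ (-(2 * s + a))) * g (t + z)) := by
        refine setLIntegral_mono' measurableSet_closedBall.compl fun z hz => ?_
        exact ofReal_ratio_mul_rpow_le hs.le hs1 ha.le ha1 ht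
          (fun h0 => hz (h0 ▸ mem_closedBall_self hδ.le))
    _ ≤ 3 * ENNReal.ofReal (2 * (δ ^ (-(2 * s)) / (2 * s))) +
        ENNReal.ofReal (t ^ (-s)) * ENNReal.ofReal (2 * (δ ^ (-s) / s)) +
        ENNReal.ofReal (8 * t ^ (-(2 * s + a))) * ENNReal.ofReal (2 * (t ^ a / a)) := by
        rw [lintegral_add_left (by fun_prop), lintegral_add_left (by fun_prop),
          lintegral_const_mul _ (by fun_prop), lintegral_const_mul _ (by fun_prop),
          lintegral_const_mul _ (by fun_prop),
          lintegral_compl_closedBall_rpow (by positivity) hδ, lintegral_compl_closedBall_rpow hs hδ]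
        gcongr
    _ ≤ _ := by
        rw [← ENNReal.ofReal_ofNat 3, ← ENNReal.ofReal_mul (by norm_num),
          ← ENNReal.ofReal_mul (by positivity), ← ENNReal.ofReal_mul (by positivity),
          ← ENNReal.ofReal_add (by positivity) (by positivity),
          ← ENNReal.ofReal_add (by positivity) (by positivity)]
        exact ENNReal.ofReal_le_ofReal (tail_bounds_add_le hs ha ht hδ)

end RelativeGrowth

section QuarterWave

open Real

/-- Even functions whose graph is also symmetric about the point with abscissa `π / 2`. Such a
function is `2π`-periodic and determined by its values on `[0, π / 2]`. -/
def IsQuarterWave (F : ℝ → ℝ) : Prop :=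
  Function.Even F ∧ ∀ x, F (π - x) + F x = F π + F 0

variable {F G : ℝ → ℝ}

lemma IsQuarterWave.periodic (hF : IsQuarterWave F) : Function.Periodic F (2 * π) := fun x => by
  have h1 := hF.2 (-x)
  have h2 := hF.2 (-(x + π))
  rw [sub_neg_eq_add, hF.1] at h1 h2
  rw [add_comm π x] at h1
  rw [show π + (x + π) = x + 2 * π by ring] at h2
  linarith

lemma IsQuarterWave.apply_arccos_cos (hF : IsQuarterWave F) (x : ℝ) : F (arccos (cos x)) = F x := by
  obtain ⟨k, hk | hk⟩ := cos_eq_cos_iff.1 (cos_arccos (neg_one_le_cos x) (cos_le_one x))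
  · have h := hF.periodic.int_mul k (arccos (cos x))
    rw [show arccos (cos x) + k * (2 * π) = x by linarith] at h
    exact h.symm
  · have h := hF.periodic.int_mul k (-arccos (cos x))
    rw [show -arccos (cos x) + k * (2 * π) = x by linarith, hF.1] at h
    exact h.symm

lemma isQuarterWave_arccos_cos : IsQuarterWave fun x => arccos (cos x) := by
  refine ⟨fun x => by simp only [cos_neg], fun x => ?_⟩
  simp only [cos_pi_sub, arccos_neg, cos_pi, cos_zero, arccos_one, sub_zero, add_zero,
    sub_add_cancel]

lemma abs_arccos_cos_sub_le (x y : ℝ) : |arccos (cos x) - arccos (cos y)| ≤ |x - y| := by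
  have hsin : ∀ x, sin (arccos (cos x)) = |sin x| := fun x => by
    rw [sin_arccos, ← abs_sin_eq_sqrt_one_sub_cos_sq]
  have hcos : ∀ x, cos (arccos (cos x)) = cos x := fun x =>
    cos_arccos (neg_one_le_cos x) (cos_le_one x)
  have hle : |arccos (cos x) - arccos (cos y)| ≤ π :=
    (abs_sub_le_of_le_of_le (arccos_nonneg _) (arccos_le_pi _) (arccos_nonneg _)
      (arccos_le_pi _)).trans_eq (sub_zero π)
  rcases le_or_gt |x - y| π with h | h
  · refine (strictAntiOn_cos.le_iff_ge ⟨abs_nonneg _, h⟩ ⟨abs_nonneg _, hle⟩).1 ?_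
    rw [cos_abs, cos_abs, cos_sub, cos_sub, hcos, hcos, hsin, hsin, ← abs_mul]
    gcongr
    exact le_abs_self _
  · exact hle.trans h.le

lemma IsQuarterWave.reflect_sub_reflect (hF : IsQuarterWave F) (x y : ℝ) :
    F (π - x) - F (π - y) = F y - F x := by
  linarith [hF.2 x, hF.2 y]

lemma IsQuarterWave.monotoneOn (hF : IsQuarterWave F) (hmono : MonotoneOn F (Icc 0 (π / 2))) :
    MonotoneOn F (Icc 0 π) := by
  have hpi := pi_pos
  have hright : MonotoneOn F (Icc (π / 2) π) := fun x hx y hy hxy => by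
    have := hmono (a := π - y) (b := π - x) ⟨by linarith [hy.2], by linarith [hy.1]⟩
      ⟨by linarith [hx.2], by linarith [hx.1]⟩ (by linarith)
    linarith [hF.reflect_sub_reflect x y]
  rw [← Icc_union_Icc_eq_Icc (by linarith : (0 : ℝ) ≤ π / 2) (by linarith)]
  exact hmono.union_right hright (isGreatest_Icc (by linarith)) (isLeast_Icc (by linarith))

variable {C γ : ℝ}

lemma IsQuarterWave.abs_sub_le_rpow_of_mem_Icc (hF : IsQuarterWave F) (hG : IsQuarterWave G)
    (hC : 0 ≤ C) (hγ : 0 ≤ γ) (hmono : MonotoneOn G (Icc 0 (π / 2)))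
    (h : ∀ x y, 0 ≤ x → x ≤ y → y ≤ π / 2 → |F x - F y| ≤ C * (G y - G x) ^ γ)
    {x y : ℝ} (hx : 0 ≤ x) (hxy : x ≤ y) (hy : y ≤ π) :
    |F x - F y| ≤ 2 * C * (G y - G x) ^ γ := by
  have hG' := hG.monotoneOn hmono
  have hnn : 0 ≤ C * (G y - G x) ^ γ := mul_nonneg hC
    (rpow_nonneg (sub_nonneg.2 (hG' ⟨hx, hxy.trans hy⟩ ⟨hx.trans hxy, hy⟩ hxy)) γ)
  have hupper : ∀ x y, π / 2 ≤ x → x ≤ y → y ≤ π → |F x - F y| ≤ C * (G y - G x) ^ γ := by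
    intro x y hx hxy hy
    have := h (π - y) (π - x) (by linarith) (by linarith) (by linarith)
    rwa [hF.reflect_sub_reflect, hG.reflect_sub_reflect] at this
  rcases le_total y (π / 2) with hy' | hy'
  · linarith [h x y hx hxy hy']
  rcases le_total (π / 2) x with hx' | hx'
  · linarith [hupper x y hx' hxy hy]
  have hGx := hG' (a := x) (b := π / 2) ⟨hx, by linarith⟩ ⟨by linarith, by linarith⟩ hx'
  have hGy := hG' (a := π / 2) (b := y) ⟨by linarith, by linarith⟩ ⟨by linarith, hy⟩ hy'
  calc |F x - F y| ≤ |F x - F (π / 2)| + |F (π / 2) - F y| := abs_sub_le _ _ _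
    _ ≤ C * (G (π / 2) - G x) ^ γ + C * (G y - G (π / 2)) ^ γ :=
      add_le_add (h x _ hx hx' le_rfl) (hupper _ y le_rfl hy' hy)
    _ ≤ C * (G y - G x) ^ γ + C * (G y - G x) ^ γ := by
      gcongr
    _ = 2 * C * (G y - G x) ^ γ := by ring

lemma IsQuarterWave.abs_sub_le_rpow (hF : IsQuarterWave F) (hG : IsQuarterWave G)
    (hC : 0 ≤ C) (hγ : 0 ≤ γ) (hmono : MonotoneOn G (Icc 0 (π / 2)))
    (h : ∀ x y, 0 ≤ x → x ≤ y → y ≤ π / 2 → |F x - F y| ≤ C * (G y - G x) ^ γ) (x y : ℝ) :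
    |F x - F y| ≤ 2 * C * |G x - G y| ^ γ := by
  have hordered : ∀ x y, 0 ≤ x → x ≤ y → y ≤ π → |F x - F y| ≤ 2 * C * |G x - G y| ^ γ :=
    fun x y hx hxy hy => by
      rw [abs_sub_comm (G x), abs_of_nonneg (sub_nonneg.2
        (hG.monotoneOn hmono ⟨hx, hxy.trans hy⟩ ⟨hx.trans hxy, hy⟩ hxy))]
      exact hF.abs_sub_le_rpow_of_mem_Icc hG hC hγ hmono h hx hxy hy
  rw [← hF.apply_arccos_cos x, ← hF.apply_arccos_cos y, ← hG.apply_arccos_cos x,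
    ← hG.apply_arccos_cos y]
  rcases le_total (arccos (cos x)) (arccos (cos y)) with hxy | hxy
  · exact hordered _ _ (arccos_nonneg _) hxy (arccos_le_pi _)
  · rw [abs_sub_comm (F _), abs_sub_comm (G _)]
    exact hordered _ _ (arccos_nonneg _) hxy (arccos_le_pi _)

end QuarterWave

section FractionalLaplacian

open Metric Real

/-- The integrand of `(-Δ)^s u (x)`, without the constant `c_s` and in the increment `z = y - x`. -/
noncomputable def fracLapIntegrand (s : ℝ) (u : ℝ → ℝ) (x z : ℝ) : ℝ :=
  (u x - u (x + z)) * |z| ^ (-(1 + 2 * s))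

/-- The singular integral defining `(-Δ)^s u (x)`, without the constant `c_s` and as a Lebesgue
integral instead of a principal value; this is adequate when `u` is `C^a` with `a > 2s`. -/
noncomputable def fracLapIntegral (s : ℝ) (u : ℝ → ℝ) (x : ℝ) : ℝ :=
  ∫ z, fracLapIntegrand s u x z

variable {s a H M : ℝ} {u : ℝ → ℝ}

lemma measurable_fracLapIntegrand (hu : Measurable u) (x : ℝ) :
    Measurable (fracLapIntegrand s u x) := by
  unfold fracLapIntegrand
  fun_prop

lemma enorm_fracLapIntegrand (x z : ℝ) : ‖fracLapIntegrand s u x z‖ₑ =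
    ENNReal.ofReal |u x - u (x + z)| * ENNReal.ofReal (|z| ^ (-(1 + 2 * s))) := by
  rw [fracLapIntegrand, enorm_mul, enorm_eq_ofReal_abs, enorm_eq_ofReal (by positivity)]

lemma lintegral_closedBall_enorm_fracLapIntegrand_le (hH : ∀ x y, |u x - u y| ≤ H * |x - y| ^ a)
    (ha : 2 * s < a) (x : ℝ) {r : ℝ} (hr : 0 ≤ r) :
    ∫⁻ z in closedBall 0 r, ‖fracLapIntegrand s u x z‖ₑ ≤
      ENNReal.ofReal (H * (2 * (r ^ (a - 2 * s) / (a - 2 * s)))) := by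
  have hH0 : 0 ≤ H := by simpa using (abs_nonneg _).trans (hH 1 0)
  rw [ENNReal.ofReal_mul hH0, ← lintegral_closedBall_rpow (by linarith) hr,
    ← lintegral_const_mul _ (by fun_prop)]
  refine lintegral_mono fun z => ?_
  rw [enorm_fracLapIntegrand, ← ENNReal.ofReal_mul (abs_nonneg _), ← ENNReal.ofReal_mul hH0]
  refine ENNReal.ofReal_le_ofReal ?_
  rcases eq_or_ne z 0 with rfl | hz
  · rw [add_zero, sub_self, abs_zero, zero_mul]
    positivity
  calc |u x - u (x + z)| * |z| ^ (-(1 + 2 * s)) ≤ H * |z| ^ a * |z| ^ (-(1 + 2 * s)) := by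
        gcongr
        simpa only [sub_add_cancel_left, abs_neg] using hH x (x + z)
    _ = H * |z| ^ (a - 2 * s - 1) := by
        rw [mul_assoc, ← rpow_add (abs_pos.2 hz)]
        ring_nf

lemma integrable_fracLapIntegrand (hu : Measurable u) (hM : ∀ x, |u x| ≤ M)
    (hH : ∀ x y, |u x - u y| ≤ H * |x - y| ^ a) (hs : 0 < s) (ha : 2 * s < a) (x : ℝ) :
    Integrable (fracLapIntegrand s u x) := by
  refine ⟨(measurable_fracLapIntegrand hu x).aestronglyMeasurable, ?_⟩
  have hfar : ∫⁻ z in (closedBall 0 1)ᶜ, ‖fracLapIntegrand s u x z‖ₑ ≤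
      ENNReal.ofReal (M + M) * ENNReal.ofReal (2 * (1 ^ (-(2 * s)) / (2 * s))) := by
    rw [← lintegral_compl_closedBall_rpow (by linarith) one_pos,
      ← lintegral_const_mul _ (by fun_prop)]
    refine lintegral_mono fun z => ?_
    rw [enorm_fracLapIntegrand]
    gcongr
    exact (abs_sub _ _).trans (add_le_add (hM _) (hM _))
  rw [HasFiniteIntegral, ← lintegral_add_compl _ measurableSet_closedBall]
  exact ENNReal.add_lt_top.2
    ⟨(lintegral_closedBall_enorm_fracLapIntegrand_le hH ha x zero_le_one).trans_lt
      ENNReal.ofReal_lt_top,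
    hfar.trans_lt (ENNReal.mul_lt_top ENNReal.ofReal_lt_top ENNReal.ofReal_lt_top)⟩

lemma enorm_fracLapIntegral_sub_le (hu : Measurable u) (hM : ∀ x, |u x| ≤ M)
    (hH : ∀ x y, |u x - u y| ≤ H * |x - y| ^ a) (hs : 0 < s) (ha : 2 * s < a) (x y : ℝ) {r : ℝ}
    (hr : 0 ≤ r) : ‖fracLapIntegral s u x - fracLapIntegral s u y‖ₑ ≤
      2 * ENNReal.ofReal (H * (2 * (r ^ (a - 2 * s) / (a - 2 * s)))) +
      ∫⁻ z in (closedBall 0 r)ᶜ, ‖fracLapIntegrand s u x z - fracLapIntegrand s u y z‖ₑ := by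
  have hint := integrable_fracLapIntegrand hu hM hH hs ha
  unfold fracLapIntegral
  rw [← integral_sub (hint x) (hint y)]
  refine (enorm_integral_le_lintegral_enorm _).trans ?_
  rw [← lintegral_add_compl _ measurableSet_closedBall, two_mul]
  refine add_le_add_left ((lintegral_mono fun z => enorm_sub_le).trans ?_) _
  rw [lintegral_add_left (measurable_fracLapIntegrand hu x).enorm]
  exact add_le_add (lintegral_closedBall_enorm_fracLapIntegrand_le hH ha x hr)
    (lintegral_closedBall_enorm_fracLapIntegrand_le hH ha y hr)

lemma hasFracLapAt_fracLapIntegral {x : ℝ} (hint : Integrable (fracLapIntegrand s u x)) :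
    HasFracLapAt s u x (fracLapCoef s * fracLapIntegral s u x) := by
  have hg : (fun y : ℝ => (u x - u y) / |x - y| ^ (1 + 2 * s)) =
      fun y => fracLapIntegrand s u x (y - x) := by
    funext y
    rw [fracLapIntegrand, rpow_neg (abs_nonneg _), abs_sub_comm y x, add_sub_cancel,
      div_eq_mul_inv]
  have hcover : AECover volume (nhdsWithin 0 (Ioi 0)) fun ε : ℝ => {y : ℝ | ε < |y - x|} := by
    refine ⟨?_, fun ε => measurableSet_lt measurable_const (by fun_prop)⟩
    filter_upwards [compl_mem_ae_iff.2 (measure_singleton x)] with y hy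
    exact mem_nhdsWithin_of_mem_nhds (Iio_mem_nhds (abs_pos.2 (sub_ne_zero.2 hy)))
  unfold HasFracLapAt
  rw [hg, fracLapIntegral, ← integral_sub_right_eq_self _ x]
  exact ⟨fun ε _ => (hint.comp_sub_right x).integrableOn,
    (hcover.integral_tendsto_of_countably_generated (hint.comp_sub_right x)).const_mul _⟩

lemma even_fracLapIntegral (hu : Function.Even u) : Function.Even (fracLapIntegral s u) := by
  intro x
  unfold fracLapIntegral
  rw [← integral_neg_eq_self]
  refine integral_congr_ae (ae_of_all _ fun z => ?_)
  simp only [fracLapIntegrand, ← neg_add, hu _, abs_neg]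

lemma isQuarterWave_fracLapIntegral (hu : IsQuarterWave u) :
    IsQuarterWave (fracLapIntegral s u) := by
  have hreflect : ∀ x, fracLapIntegral s u (π - x) = -fracLapIntegral s u x := by
    intro x
    unfold fracLapIntegral
    rw [← integral_neg_eq_self, ← integral_neg]
    refine integral_congr_ae (ae_of_all _ fun z => ?_)
    have h := hu.reflect_sub_reflect x (x + z)
    simp only [fracLapIntegrand, abs_neg, show π - x + -z = π - (x + z) by ring, h]
    ring
  refine ⟨even_fracLapIntegral hu.1, fun x => ?_⟩
  have h0 := hreflect 0
  rw [sub_zero] at h0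
  rw [hreflect, h0, neg_add_cancel, neg_add_cancel]

end FractionalLaplacian

section Profile

open Metric Real

/-- Odd `π`-antiperiodic functions, positive on `(0, π)`, whose growth near `0` lies between
`|t| ^ s` and `|t| ^ (a - 1)` in the relative sense of `abs_le_mul`. The derivative of the function
`u` of the theorem is of this form; all estimates on `u` and `(-Δ)^s u` only use these
properties. -/
structure IsProfile (s a K : ℝ) (v : ℝ → ℝ) : Prop where
  measurable : Measurable v
  odd : Function.Odd v
  antiperiodic : Function.Antiperiodic v π
  pos : ∀ t, 0 < t → t < π → 0 < v t
  abs_le_mul : ∀ t p, 0 < t → t ≤ π / 2 → p ≠ 0 → |p| ≤ 3 * π / 4 →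
    |v p| ≤ K * v t * ((|p| / t) ^ s + (|p| / t) ^ (a - 1))

/-- The primitive of `v` vanishing at `0`. -/
noncomputable def primitive (v : ℝ → ℝ) (x : ℝ) : ℝ :=
  ∫ t in 0..x, v t

lemma primitive_zero (v : ℝ → ℝ) : primitive v 0 = 0 :=
  intervalIntegral.integral_same

namespace IsProfile

variable {s a K : ℝ} {v : ℝ → ℝ}

lemma pos_half_pi (h : IsProfile s a K v) : 0 < v (π / 2) :=
  h.pos _ pi_div_two_pos (half_lt_self pi_pos)

lemma pi_sub (h : IsProfile s a K v) (t : ℝ) : v (π - t) = v t := by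
  rw [sub_eq_neg_add, h.antiperiodic, h.odd, neg_neg]

lemma enorm_periodic (h : IsProfile s a K v) : Function.Periodic (fun t => ‖v t‖ₑ) π := fun t => by
  simp only [h.antiperiodic t, enorm_neg]

lemma enorm_even (h : IsProfile s a K v) : Function.Even fun t => ‖v t‖ₑ := fun t => by
  simp only [h.odd t, enorm_neg]

lemma const_pos (h : IsProfile s a K v) : 0 < K := by
  have hle := h.abs_le_mul (π / 2) (π / 2) pi_div_two_pos le_rfl pi_div_two_pos.ne'
    (by rw [abs_of_pos pi_div_two_pos]; linarith [pi_pos])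
  rw [abs_of_pos pi_div_two_pos, div_self pi_div_two_pos.ne', one_rpow, one_rpow] at hle
  have := abs_pos.2 h.pos_half_pi.ne'
  exact pos_of_mul_pos_left (pos_of_mul_pos_left (this.trans_le hle) (by norm_num)) h.pos_half_pi.le

lemma exists_abs_le_rpow (h : IsProfile s a K v) (hs : 0 ≤ s) (ha : a ≤ 1) :
    ∃ C, 0 ≤ C ∧ ∀ p, p ≠ 0 → |p| ≤ π / 2 → |v p| ≤ C * |p| ^ (a - 1) := by
  have hK := h.const_pos
  have hv := h.pos_half_pi
  refine ⟨K * v (π / 2) * (2 / (π / 2) ^ (a - 1)), by positivity, fun p hp0 hp => ?_⟩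
  have hp' := abs_pos.2 hp0
  have hratio : |p| / (π / 2) ≤ 1 := div_le_one_of_le₀ hp pi_div_two_pos.le
  calc |v p| ≤ K * v (π / 2) * ((|p| / (π / 2)) ^ s + (|p| / (π / 2)) ^ (a - 1)) :=
        h.abs_le_mul _ p pi_div_two_pos le_rfl hp0 (by linarith)
    _ ≤ K * v (π / 2) * (2 * (|p| / (π / 2)) ^ (a - 1)) := by
        rw [two_mul]
        gcongr ?_ * (?_ + _)
        exact rpow_le_rpow_of_exponent_ge (by positivity) hratio (by linarith)
    _ = K * v (π / 2) * (2 / (π / 2) ^ (a - 1)) * |p| ^ (a - 1) := by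
        rw [div_rpow hp'.le pi_div_two_pos.le]
        ring

lemma exists_one_le_mul_rpow_mul (h : IsProfile s a K v) (hs : 0 ≤ s) (ha : a ≤ 1) :
    ∃ C, 0 ≤ C ∧ ∀ t, 0 < t → t ≤ π / 2 → 1 ≤ C * (t ^ (-(2 * s)) * v t) := by
  have hK := h.const_pos
  have hv := h.pos_half_pi
  refine ⟨(v (π / 2))⁻¹ * (2 * K * (π / 2) ^ (2 * s)), by positivity, fun t ht ht' => ?_⟩
  have hvt := h.pos t ht (by linarith [pi_pos])
  have hratio : 1 ≤ π / 2 / t := (one_le_div ht).2 ht'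
  rw [mul_assoc, le_inv_mul_iff₀ hv, mul_one]
  calc v (π / 2) ≤ K * v t * ((π / 2 / t) ^ s + (π / 2 / t) ^ (a - 1)) := by
        have := h.abs_le_mul t (π / 2) ht ht' pi_div_two_pos.ne'
          (by rw [abs_of_pos pi_div_two_pos]; linarith [pi_pos])
        rwa [abs_of_pos hv, abs_of_pos pi_div_two_pos] at this
    _ ≤ K * v t * (2 * (π / 2 / t) ^ (2 * s)) := by
        rw [two_mul ((π / 2 / t) ^ (2 * s))]
        gcongr ?_ * (?_ + ?_) <;> exact rpow_le_rpow_of_exponent_le hratio (by linarith)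
    _ = 2 * K * (π / 2) ^ (2 * s) * (t ^ (-(2 * s)) * v t) := by
        rw [div_rpow pi_div_two_pos.le ht.le, rpow_neg ht.le]
        ring

lemma intervalIntegrable (h : IsProfile s a K v) (hs : 0 ≤ s) (ha0 : 0 < a) (ha : a ≤ 1) (x y : ℝ) :
    IntervalIntegrable v volume x y := by
  obtain ⟨C, hC, hle⟩ := h.exists_abs_le_rpow hs ha
  have hball : IntegrableOn v (closedBall 0 (π / 2)) := by
    refine ⟨h.measurable.aestronglyMeasurable, ?_⟩
    calc ∫⁻ t in closedBall 0 (π / 2), ‖v t‖ₑ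
        ≤ ∫⁻ t in closedBall (0 : ℝ) (π / 2),
            ENNReal.ofReal C * ENNReal.ofReal (|t| ^ (a - 1)) := by
          refine setLIntegral_mono' measurableSet_closedBall fun t ht => ?_
          rw [← ENNReal.ofReal_mul hC, enorm_eq_ofReal_abs]
          rcases eq_or_ne t 0 with rfl | ht0
          · rw [h.odd.map_zero, abs_zero, ENNReal.ofReal_zero]
            exact zero_le
          · exact ENNReal.ofReal_le_ofReal (hle t ht0 (mem_closedBall_zero_iff.1 ht))
      _ < ⊤ := by
          rw [lintegral_const_mul _ (by fun_prop), lintegral_closedBall_rpow ha0 (by positivity)]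
          exact ENNReal.mul_lt_top ENNReal.ofReal_lt_top ENNReal.ofReal_lt_top
  have hperiod : IntervalIntegrable (fun t => ‖v t‖) volume (-(π / 2)) (-(π / 2) + π) := by
    rw [intervalIntegrable_iff_integrableOn_Icc_of_le (by linarith [pi_pos]),
      show -(π / 2) + π = π / 2 by ring]
    simpa only [IntegrableOn, closedBall_eq_Icc, zero_sub, zero_add] using hball.norm
  refine (IntervalIntegrable.intervalIntegrable_norm_iff
    h.measurable.aestronglyMeasurable).1
    (Function.Periodic.intervalIntegrable (fun t => ?_) pi_ne_zero hperiod x y)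
  simp only [h.antiperiodic t, norm_neg]

lemma isQuarterWave_primitive (h : IsProfile s a K v) (hs : 0 ≤ s) (ha0 : 0 < a) (ha : a ≤ 1) :
    IsQuarterWave (primitive v) := by
  refine ⟨fun x => ?_, fun x => ?_⟩
  · rw [primitive, primitive, ← neg_zero, ← intervalIntegral.integral_comp_neg]
    simp only [h.odd _, intervalIntegral.integral_neg, neg_zero]
    rw [intervalIntegral.integral_symm, neg_neg]
  · have hreflect : primitive v (π - x) = ∫ t in x..π, v t := by
      have := intervalIntegral.integral_comp_sub_left (a := 0) (b := π - x) v π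
      simpa only [primitive, h.pi_sub, sub_sub_cancel, sub_zero] using this
    have hint := h.intervalIntegrable hs ha0 ha
    rw [hreflect, primitive, primitive, primitive, intervalIntegral.integral_same, add_zero,
      add_comm, intervalIntegral.integral_add_adjacent_intervals (hint _ _) (hint _ _)]

lemma primitive_sub_primitive (h : IsProfile s a K v) (hs : 0 ≤ s) (ha0 : 0 < a) (ha : a ≤ 1)
    (x y : ℝ) : primitive v y - primitive v x = ∫ t in x..y, v t :=
  intervalIntegral.integral_interval_sub_left (h.intervalIntegrable hs ha0 ha _ _)
    (h.intervalIntegrable hs ha0 ha _ _)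

lemma continuous_primitive (h : IsProfile s a K v) (hs : 0 ≤ s) (ha0 : 0 < a) (ha : a ≤ 1) :
    Continuous (primitive v) :=
  intervalIntegral.continuous_primitive (h.intervalIntegrable hs ha0 ha) 0

lemma strictMonoOn_primitive (h : IsProfile s a K v) (hs : 0 ≤ s) (ha0 : 0 < a) (ha : a ≤ 1) :
    StrictMonoOn (primitive v) (Icc 0 π) := fun x hx y hy hxy => by
  rw [← sub_pos, h.primitive_sub_primitive hs ha0 ha]
  exact intervalIntegral.intervalIntegral_pos_of_pos_on (h.intervalIntegrable hs ha0 ha x y)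
    (fun t ht => h.pos t (hx.1.trans_lt ht.1) (ht.2.trans_le hy.2)) hxy

lemma primitive_mono (h : IsProfile s a K v) (hs : 0 ≤ s) (ha0 : 0 < a) (ha : a ≤ 1) {x y : ℝ}
    (hx : 0 ≤ x) (hxy : x ≤ y) (hy : y ≤ π) : primitive v x ≤ primitive v y :=
  (h.strictMonoOn_primitive hs ha0 ha).monotoneOn ⟨hx, hxy.trans hy⟩ ⟨hx.trans hxy, hy⟩ hxy

lemma range_primitive (h : IsProfile s a K v) (hs : 0 ≤ s) (ha0 : 0 < a) (ha : a ≤ 1) :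
    range (primitive v) = Icc 0 (primitive v π) := by
  have hmono := (h.strictMonoOn_primitive hs ha0 ha).monotoneOn
  have hcont := h.continuous_primitive hs ha0 ha
  refine Subset.antisymm ?_ ?_
  · rintro _ ⟨x, rfl⟩
    rw [← (h.isQuarterWave_primitive hs ha0 ha).apply_arccos_cos x, ← primitive_zero v]
    exact hmono.mapsTo_Icc ⟨arccos_nonneg _, arccos_le_pi _⟩
  · rw [← primitive_zero v]
    exact (intermediate_value_Icc pi_pos.le hcont.continuousOn).trans (image_subset_range _ _)

lemma abs_primitive_le (h : IsProfile s a K v) (hs : 0 ≤ s) (ha0 : 0 < a) (ha : a ≤ 1) (x : ℝ) :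
    |primitive v x| ≤ primitive v π := by
  have hx : primitive v x ∈ Icc 0 (primitive v π) := h.range_primitive hs ha0 ha ▸ mem_range_self x
  rw [abs_of_nonneg hx.1]
  exact hx.2

lemma exists_primitive_sub_le (h : IsProfile s a K v) (hs : 0 ≤ s) (ha0 : 0 < a) (ha : a ≤ 1) :
    ∃ C, 0 ≤ C ∧ ∀ x y, 0 ≤ x → x ≤ y → y ≤ π / 2 →
      primitive v y - primitive v x ≤ C * (y - x) ^ a := by
  obtain ⟨C, hC, hle⟩ := h.exists_abs_le_rpow hs ha
  refine ⟨C / a, by positivity, fun x y hx hxy hy => ?_⟩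
  have hrpow : IntervalIntegrable (fun t : ℝ => t ^ (a - 1)) volume x y :=
    intervalIntegral.intervalIntegrable_rpow' (by linarith)
  have hadd : y ^ a ≤ x ^ a + (y - x) ^ a := by
    simpa only [add_sub_cancel] using rpow_add_le_add_rpow hx (sub_nonneg.2 hxy) ha0.le ha
  calc primitive v y - primitive v x = ∫ t in x..y, v t := h.primitive_sub_primitive hs ha0 ha x y
    _ ≤ ∫ t in x..y, C * t ^ (a - 1) := by
        refine intervalIntegral.integral_mono_on_of_le_Ioo hxy (h.intervalIntegrable hs ha0 ha x y)
          (hrpow.const_mul C) fun t ht => ?_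
        have ht0 := hx.trans_lt ht.1
        have := hle t ht0.ne' (by rw [abs_of_pos ht0]; linarith [ht.2])
        rw [abs_of_pos ht0] at this
        exact (le_abs_self _).trans this
    _ = C / a * (y ^ a - x ^ a) := by
        rw [intervalIntegral.integral_const_mul, integral_rpow (Or.inl (by linarith)),
          sub_add_cancel]
        ring
    _ ≤ C / a * (y - x) ^ a := by
        gcongr
        linarith

lemma exists_abs_primitive_sub_le (h : IsProfile s a K v) (hs : 0 ≤ s) (ha0 : 0 < a) (ha : a ≤ 1) :
    ∃ C, 0 ≤ C ∧ ∀ x y, |primitive v x - primitive v y| ≤ C * |x - y| ^ a := by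
  obtain ⟨C, hC, hle⟩ := h.exists_primitive_sub_le hs ha0 ha
  have hpi := pi_pos
  have hangle : ∀ x, 0 ≤ x → x ≤ π / 2 → arccos (cos x) = x := fun x hx hx' =>
    arccos_cos hx (by linarith)
  refine ⟨2 * C, by positivity, fun x y => ?_⟩
  refine ((h.isQuarterWave_primitive hs ha0 ha).abs_sub_le_rpow isQuarterWave_arccos_cos hC ha0.le
    (fun x hx y hy hxy => ?_) (fun x y hx hxy hy => ?_) x y).trans ?_
  · simpa only [hangle _ hx.1 hx.2, hangle _ hy.1 hy.2] using hxy
  · have hmono := (h.strictMonoOn_primitive hs ha0 ha).monotoneOn (a := x) (b := y)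
      ⟨hx, by linarith⟩ ⟨hx.trans hxy, by linarith⟩ hxy
    simp only [hangle _ hx (hxy.trans hy), hangle _ (hx.trans hxy) hy]
    rw [abs_sub_comm, abs_of_nonneg (sub_nonneg.2 hmono)]
    exact hle x y hx hxy hy
  · gcongr 2 * C * ?_ ^ a
    exact abs_arccos_cos_sub_le x y

lemma enorm_comp_add_mul_le (h : IsProfile s a K v) {t z : ℝ} (ht : 0 < t) (ht' : t ≤ π / 2)
    (hz : |z| ≤ π / 4) :
    ‖v (t + z)‖ₑ * ENNReal.ofReal (|z| ^ (-(1 + 2 * s))) ≤ ENNReal.ofReal (K * v t) *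
      ENNReal.ofReal (((|t + z| / t) ^ s + (|t + z| / t) ^ (a - 1)) * |z| ^ (-(1 + 2 * s))) := by
  have hKv : 0 ≤ K * v t := (mul_pos h.const_pos (h.pos t ht (by linarith [pi_pos]))).le
  rcases eq_or_ne (t + z) 0 with h0 | h0
  · rw [h0, h.odd.map_zero, enorm_zero, zero_mul]
    exact zero_le
  rw [enorm_eq_ofReal_abs, ← ENNReal.ofReal_mul (abs_nonneg _), ← ENNReal.ofReal_mul hKv,
    ← mul_assoc]
  gcongr
  refine h.abs_le_mul t (t + z) ht ht' h0 ((abs_add_le t z).trans ?_)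
  rw [abs_of_pos ht]
  linarith

lemma exists_lintegral_tail_le (h : IsProfile s a K v) (hs : 0 < s) (ha0 : 0 < a) (ha : a ≤ 1) :
    ∃ C : NNReal, ∀ t, 0 < t → t ≤ π / 2 →
      ∫⁻ z in (closedBall 0 (π / 4))ᶜ, ‖v (t + z)‖ₑ * ENNReal.ofReal (|z| ^ (-(1 + 2 * s))) ≤
        C * ENNReal.ofReal (t ^ (-(2 * s)) * v t) := by
  obtain ⟨C, hC, hle⟩ := h.exists_one_le_mul_rpow_mul hs.le ha
  set A := 2 * ((∫⁻ z in Ioc 0 π, ‖v z‖ₑ) *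
    ∑' n : ℕ, ENNReal.ofReal ((π / 4 + n * π) ^ (-(1 + 2 * s))))
  have hA : A ≠ ⊤ := by
    have hint := (intervalIntegrable_iff_integrableOn_Ioc_of_le pi_pos.le).1
      (h.intervalIntegrable hs.le ha0 ha 0 π)
    exact ENNReal.mul_ne_top ENNReal.ofNat_ne_top (ENNReal.mul_ne_top hint.2.ne
      (tsum_ofReal_rpow_ne_top (by positivity) pi_pos (by linarith)))
  refine ⟨A.toNNReal * C.toNNReal, fun t ht ht' => ?_⟩
  have hanti : AntitoneOn (fun z : ℝ => ENNReal.ofReal (z ^ (-(1 + 2 * s)))) (Ici (π / 4)) :=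
    fun x hx y _ hxy => ENNReal.ofReal_le_ofReal
      (rpow_le_rpow_of_nonpos ((by positivity : 0 < π / 4).trans_le hx) hxy (by linarith))
  calc _ ≤ A := lintegral_compl_closedBall_comp_add_mul_le h.enorm_periodic h.measurable.enorm
        h.enorm_even pi_pos (by positivity) hanti t
    _ ≤ A * ENNReal.ofReal (C * (t ^ (-(2 * s)) * v t)) :=
        le_mul_of_one_le_right' (ENNReal.one_le_ofReal.2 (hle t ht ht'))
    _ = _ := by
        rw [ENNReal.ofReal_mul hC, ← mul_assoc, ENNReal.coe_mul, ENNReal.coe_toNNReal hA]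
        rfl

lemma exists_lintegral_compl_closedBall_le (h : IsProfile s a K v) (hs : 0 < s) (hs1 : s ≤ 1)
    (ha0 : 0 < a) (ha : a ≤ 1) :
    ∃ C : NNReal, ∀ t δ, 0 < t → t ≤ π / 2 → 0 < δ →
      ∫⁻ z in (closedBall 0 δ)ᶜ, ‖v (t + z)‖ₑ * ENNReal.ofReal (|z| ^ (-(1 + 2 * s))) ≤
        C * ENNReal.ofReal ((δ ^ (-(2 * s)) + t ^ (-(2 * s))) * v t) := by
  obtain ⟨C, htail⟩ := h.exists_lintegral_tail_le hs ha0 ha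
  refine ⟨(K * (5 / s + 16 / a)).toNNReal + C, fun t δ ht ht' hδ => ?_⟩
  have hK := h.const_pos
  have hv := h.pos t ht (by linarith [pi_pos])
  have hsub : (closedBall (0 : ℝ) δ)ᶜ ⊆
      (closedBall 0 δ)ᶜ ∩ closedBall 0 (π / 4) ∪ (closedBall 0 (π / 4))ᶜ := fun z hz =>
    (em (z ∈ closedBall 0 (π / 4))).imp (fun hz' => ⟨hz, hz'⟩) id
  have hnear : ∫⁻ z in (closedBall 0 δ)ᶜ ∩ closedBall 0 (π / 4),
      ‖v (t + z)‖ₑ * ENNReal.ofReal (|z| ^ (-(1 + 2 * s))) ≤ ENNReal.ofReal (K * v t) *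
        ENNReal.ofReal ((5 / s + 16 / a) * (δ ^ (-(2 * s)) + t ^ (-(2 * s)))) := by
    refine (setLIntegral_mono' (measurableSet_closedBall.compl.inter measurableSet_closedBall)
      fun z hz => h.enorm_comp_add_mul_le ht ht' (mem_closedBall_zero_iff.1 hz.2)).trans ?_
    refine (lintegral_mono_set inter_subset_left).trans ?_
    rw [lintegral_const_mul _ (by fun_prop)]
    gcongr
    exact lintegral_compl_closedBall_ratio_mul_rpow_le hs hs1 ha0 ha ht hδ
  calc _ ≤ _ := (lintegral_mono_set hsub).trans (lintegral_union_le _ _ _)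
    _ ≤ _ := add_le_add hnear (htail t ht ht')
    _ ≤ (K * (5 / s + 16 / a)).toNNReal *
          ENNReal.ofReal ((δ ^ (-(2 * s)) + t ^ (-(2 * s))) * v t) +
        C * ENNReal.ofReal ((δ ^ (-(2 * s)) + t ^ (-(2 * s))) * v t) := by
        gcongr ?_ + _ * ENNReal.ofReal (?_ * _)
        · change _ ≤ ENNReal.ofReal _ * _
          rw [← ENNReal.ofReal_mul (by positivity), ← ENNReal.ofReal_mul (by positivity)]
          exact ENNReal.ofReal_le_ofReal (by ring_nf; rfl)
        · exact le_add_of_nonneg_left (by positivity)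
    _ = _ := by rw [ENNReal.coe_add, ← add_mul]

lemma exists_add_rpow_mul_le (h : IsProfile s a K v) (hs : 0 ≤ s) (ha : a ≤ 1) :
    ∃ C, 0 ≤ C ∧ ∀ t δ, 0 < t → t ≤ π / 2 → 0 < δ →
      (δ ^ (-(2 * s)) + t ^ (-(2 * s))) * v t ≤ 2 * δ ^ (-(2 * s)) * v t +
        C * (closedBall 0 δ).indicator (fun t => |t| ^ (a - 2 * s - 1)) t := by
  obtain ⟨C, hC, hle⟩ := h.exists_abs_le_rpow hs ha
  refine ⟨C, hC, fun t δ ht ht' hδ => ?_⟩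
  have hv := h.pos t ht (by linarith [pi_pos])
  by_cases htδ : t ∈ closedBall 0 δ
  · have hsing : t ^ (-(2 * s)) * v t ≤ C * t ^ (a - 2 * s - 1) := by
      have hvt := hle t ht.ne' (by rwa [abs_of_pos ht])
      rw [abs_of_pos hv, abs_of_pos ht] at hvt
      calc t ^ (-(2 * s)) * v t ≤ t ^ (-(2 * s)) * (C * t ^ (a - 1)) := by gcongr
        _ = C * t ^ (a - 2 * s - 1) := by
            rw [mul_left_comm, ← rpow_add ht]
            ring_nf
    rw [indicator_of_mem htδ, abs_of_pos ht]
    have : 0 ≤ δ ^ (-(2 * s)) * v t := by positivity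
    linarith
  · rw [indicator_of_notMem htδ, mul_zero, add_zero, two_mul (δ ^ _)]
    rw [mem_closedBall_zero_iff, norm_of_nonneg ht.le, not_le] at htδ
    gcongr ?_ * _
    exact add_le_add_right (rpow_le_rpow_of_nonpos hδ htδ.le (neg_nonpos.2 (by positivity))) _

lemma lintegral_Ioc_ofReal (h : IsProfile s a K v) (hs : 0 ≤ s) (ha0 : 0 < a) (ha : a ≤ 1)
    {x y : ℝ} (hx : 0 ≤ x) (hxy : x ≤ y) (hy : y < π) :
    ∫⁻ t in Ioc x y, ENNReal.ofReal (v t) = ENNReal.ofReal (primitive v y - primitive v x) := by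
  rw [h.primitive_sub_primitive hs ha0 ha, intervalIntegral.integral_of_le hxy,
    ofReal_integral_eq_lintegral_ofReal
      ((intervalIntegrable_iff_integrableOn_Ioc_of_le hxy).1 (h.intervalIntegrable hs ha0 ha x y))]
  filter_upwards [ae_restrict_mem measurableSet_Ioc] with t ht
  exact (h.pos t (hx.trans_lt ht.1) (ht.2.trans_lt hy)).le

lemma exists_lintegral_Ioc_le (h : IsProfile s a K v) (hs : 0 < s) (ha : a ≤ 1) (hsa : 2 * s < a) :
    ∃ C : NNReal, ∀ x y δ, 0 ≤ x → x ≤ y → y ≤ π / 2 → 0 < δ →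
      ∫⁻ t in Ioc x y, ENNReal.ofReal ((δ ^ (-(2 * s)) + t ^ (-(2 * s))) * v t) ≤
        C * ENNReal.ofReal
          (δ ^ (-(2 * s)) * (primitive v y - primitive v x) + δ ^ (a - 2 * s)) := by
  obtain ⟨C, hC, hle⟩ := h.exists_add_rpow_mul_le hs.le ha
  have hpos : 0 < a - 2 * s := by linarith
  refine ⟨(2 + C * (2 / (a - 2 * s))).toNNReal, fun x y δ hx hxy hy hδ => ?_⟩
  have hvm := h.measurable
  set g := (closedBall (0 : ℝ) δ).indicator fun t => ENNReal.ofReal (|t| ^ (a - 2 * s - 1))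
  have hg : ∀ t, ENNReal.ofReal
      ((closedBall (0 : ℝ) δ).indicator (fun t => |t| ^ (a - 2 * s - 1)) t) = g t := fun t =>
    (congr_fun (indicator_comp_of_zero (g := ENNReal.ofReal) ENNReal.ofReal_zero) t).symm
  have hgm : Measurable g := Measurable.indicator (by fun_prop) measurableSet_closedBall
  have hgint : ∫⁻ t in Ioc x y, g t ≤ ENNReal.ofReal (2 * (δ ^ (a - 2 * s) / (a - 2 * s))) := by
    rw [← lintegral_closedBall_rpow hpos hδ.le, ← lintegral_indicator measurableSet_closedBall]
    exact setLIntegral_le_lintegral _ _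
  have hD : 0 ≤ primitive v y - primitive v x :=
    sub_nonneg.2 (h.primitive_mono hs.le (by linarith) ha hx hxy (by linarith [pi_pos]))
  calc _ ≤ ∫⁻ t in Ioc x y, (ENNReal.ofReal (2 * δ ^ (-(2 * s))) * ENNReal.ofReal (v t) +
        ENNReal.ofReal C * g t) := by
        refine setLIntegral_mono' measurableSet_Ioc fun t ht => ?_
        rw [← hg, ← ENNReal.ofReal_mul (by positivity), ← ENNReal.ofReal_mul hC]
        exact (ENNReal.ofReal_le_ofReal (hle t δ (hx.trans_lt ht.1) (ht.2.trans hy) hδ)).trans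
          ENNReal.ofReal_add_le
    _ ≤ ENNReal.ofReal (2 * δ ^ (-(2 * s))) * ENNReal.ofReal (primitive v y - primitive v x) +
        ENNReal.ofReal C * ENNReal.ofReal (2 * (δ ^ (a - 2 * s) / (a - 2 * s))) := by
        rw [lintegral_add_left (by fun_prop), lintegral_const_mul _ (by fun_prop),
          lintegral_const_mul _ hgm,
          h.lintegral_Ioc_ofReal hs.le (by linarith) ha hx hxy (by linarith [pi_pos])]
        gcongr
    _ ≤ ENNReal.ofReal (2 + C * (2 / (a - 2 * s))) * ENNReal.ofReal
          (δ ^ (-(2 * s)) * (primitive v y - primitive v x) + δ ^ (a - 2 * s)) := by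
        rw [← ENNReal.ofReal_mul (by positivity), ← ENNReal.ofReal_mul hC,
          ← ENNReal.ofReal_mul (by positivity),
          ← ENNReal.ofReal_add (by positivity) (by positivity)]
        refine ENNReal.ofReal_le_ofReal (sub_nonneg.1 (le_of_le_of_eq
          (b := 2 * δ ^ (a - 2 * s) + C * (2 / (a - 2 * s)) *
            (δ ^ (-(2 * s)) * (primitive v y - primitive v x))) (by positivity) (by ring)))

lemma exists_lintegral_far_le (h : IsProfile s a K v) (hs : 0 < s) (ha : a ≤ 1) (hsa : 2 * s < a) :
    ∃ C : NNReal, ∀ x y δ, 0 ≤ x → x ≤ y → y ≤ π / 2 → 0 < δ →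
      ∫⁻ z in (closedBall 0 δ)ᶜ,
        ∫⁻ t in Ioc x y, ‖v (t + z)‖ₑ * ENNReal.ofReal (|z| ^ (-(1 + 2 * s))) ≤
      C * ENNReal.ofReal (δ ^ (-(2 * s)) * (primitive v y - primitive v x) + δ ^ (a - 2 * s)) := by
  obtain ⟨C₁, h₁⟩ := h.exists_lintegral_compl_closedBall_le hs (by linarith) (by linarith) ha
  obtain ⟨C₂, h₂⟩ := h.exists_lintegral_Ioc_le hs ha hsa
  refine ⟨C₁ * C₂, fun x y δ hx hxy hy hδ => ?_⟩
  have hvm := h.measurable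
  have hm : Measurable (Function.uncurry fun z t : ℝ =>
      ‖v (t + z)‖ₑ * ENNReal.ofReal (|z| ^ (-(1 + 2 * s)))) := by
    unfold Function.uncurry
    fun_prop
  rw [lintegral_lintegral_swap hm.aemeasurable]
  calc _ ≤ ∫⁻ t in Ioc x y, C₁ * ENNReal.ofReal ((δ ^ (-(2 * s)) + t ^ (-(2 * s))) * v t) :=
        setLIntegral_mono' measurableSet_Ioc fun t ht =>
          h₁ t δ (hx.trans_lt ht.1) (ht.2.trans hy) hδ
    _ ≤ C₁ * (C₂ * _) := by
        rw [lintegral_const_mul _ (by fun_prop)]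
        gcongr
        exact h₂ x y δ hx hxy hy hδ
    _ = _ := by rw [← mul_assoc, ENNReal.coe_mul]

lemma enorm_fracLapIntegrand_primitive_sub_le (h : IsProfile s a K v) (hs : 0 ≤ s) (ha0 : 0 < a)
    (ha : a ≤ 1) {x y : ℝ} (hxy : x ≤ y) (z : ℝ) :
    ‖fracLapIntegrand s (primitive v) x z - fracLapIntegrand s (primitive v) y z‖ₑ ≤
      ENNReal.ofReal |primitive v y - primitive v x| * ENNReal.ofReal (|z| ^ (-(1 + 2 * s))) +
      ∫⁻ t in Ioc x y, ‖v (t + z)‖ₑ * ENNReal.ofReal (|z| ^ (-(1 + 2 * s))) := by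
  have hvm := h.measurable
  have hshift : primitive v (y + z) - primitive v (x + z) = ∫ t in x..y, v (t + z) := by
    rw [h.primitive_sub_primitive hs ha0 ha, intervalIntegral.integral_comp_add_right]
  have hdiff : fracLapIntegrand s (primitive v) x z - fracLapIntegrand s (primitive v) y z =
      ((∫ t in Ioc x y, v (t + z)) - (primitive v y - primitive v x)) * |z| ^ (-(1 + 2 * s)) := by
    rw [← intervalIntegral.integral_of_le hxy, ← hshift, fracLapIntegrand, fracLapIntegrand]
    ring
  rw [hdiff, enorm_mul, enorm_eq_ofReal (by positivity : 0 ≤ |z| ^ (-(1 + 2 * s))),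
    lintegral_mul_const _ (by fun_prop), ← add_mul, ← enorm_eq_ofReal_abs, enorm_sub_rev]
  gcongr
  exact enorm_sub_le.trans (add_le_add_right (enorm_integral_le_lintegral_enorm _) _)

lemma exists_abs_fracLapIntegral_sub_le_add (h : IsProfile s a K v) (hs : 0 < s) (ha : a ≤ 1)
    (hsa : 2 * s < a) : ∃ C, 0 ≤ C ∧ ∀ x y δ, 0 ≤ x → x ≤ y → y ≤ π / 2 → 0 < δ →
      |fracLapIntegral s (primitive v) x - fracLapIntegral s (primitive v) y| ≤
        C * (δ ^ (-(2 * s)) * (primitive v y - primitive v x) + δ ^ (a - 2 * s)) := by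
  have ha0 : 0 < a := by linarith
  have hpos : 0 < a - 2 * s := by linarith
  obtain ⟨H, hH, hholder⟩ := h.exists_abs_primitive_sub_le hs.le ha0 ha
  obtain ⟨C, hfar⟩ := h.exists_lintegral_far_le hs ha hsa
  refine ⟨4 * H / (a - 2 * s) + 1 / s + C, by positivity, fun x y δ hx hxy hy hδ => ?_⟩
  have hD := sub_nonneg.2 (h.primitive_mono hs.le ha0 ha hx hxy (by linarith [pi_pos]))
  set D := primitive v y - primitive v x
  have hdiff : ∫⁻ z in (closedBall 0 δ)ᶜ, ‖fracLapIntegrand s (primitive v) x z -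
      fracLapIntegrand s (primitive v) y z‖ₑ ≤
      ENNReal.ofReal D * ENNReal.ofReal (2 * (δ ^ (-(2 * s)) / (2 * s))) +
        C * ENNReal.ofReal (δ ^ (-(2 * s)) * D + δ ^ (a - 2 * s)) := by
    refine (lintegral_mono fun z =>
      h.enorm_fracLapIntegrand_primitive_sub_le hs.le ha0 ha hxy z).trans ?_
    rw [lintegral_add_left (by fun_prop), lintegral_const_mul _ (by fun_prop),
      lintegral_compl_closedBall_rpow (by positivity) hδ, abs_of_nonneg hD]
    gcongr
    exact hfar x y δ hx hxy hy hδ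
  refine (ENNReal.ofReal_le_ofReal_iff (by positivity)).1 ?_
  rw [← enorm_eq_ofReal_abs]
  refine (enorm_fracLapIntegral_sub_le (h.continuous_primitive hs.le ha0 ha).measurable
    (h.abs_primitive_le hs.le ha0 ha) hholder hs hsa x y hδ.le).trans ?_
  refine (add_le_add_right hdiff _).trans ?_
  rw [← ENNReal.ofReal_ofNat 2, ← ENNReal.ofReal_coe_nnreal, ← ENNReal.ofReal_mul zero_le_two,
    ← ENNReal.ofReal_mul hD, ← ENNReal.ofReal_mul C.coe_nonneg,
    ← ENNReal.ofReal_add (by positivity) (by positivity),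
    ← ENNReal.ofReal_add (by positivity) (by positivity)]
  refine ENNReal.ofReal_le_ofReal (sub_nonneg.1 (le_of_le_of_eq (b := 4 * H / (a - 2 * s) *
    (δ ^ (-(2 * s)) * D) + 1 / s * δ ^ (a - 2 * s)) (by positivity) ?_))
  field_simp
  ring

/- The optimal splitting radius is `δ = D ^ (1 / a)` with `D = u y - u x`: the far part
`δ ^ (-2 * s) * D` and the near part `δ ^ (a - 2 * s)` are then both equal to
`D ^ ((a - 2 * s) / a)`. -/
lemma exists_abs_fracLapIntegral_sub_le_rpow (h : IsProfile s a K v) (hs : 0 < s) (ha : a ≤ 1)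
    (hsa : 2 * s < a) : ∃ C, 0 ≤ C ∧ ∀ x y, 0 ≤ x → x ≤ y → y ≤ π / 2 →
      |fracLapIntegral s (primitive v) x - fracLapIntegral s (primitive v) y| ≤
        C * (primitive v y - primitive v x) ^ ((a - 2 * s) / a) := by
  have ha0 : 0 < a := by linarith
  have : 0 < a - 2 * s := by linarith
  obtain ⟨C, hC, hle⟩ := h.exists_abs_fracLapIntegral_sub_le_add hs ha hsa
  refine ⟨2 * C, by positivity, fun x y hx hxy hy => ?_⟩
  rcases hxy.eq_or_lt with rfl | hlt
  · rw [sub_self, sub_self, abs_zero, zero_rpow (by positivity), mul_zero]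
  have hD := sub_pos.2 (h.strictMonoOn_primitive hs.le ha0 ha ⟨hx, by linarith [pi_pos]⟩
    ⟨hx.trans hxy, by linarith [pi_pos]⟩ hlt)
  have hδ := hle x y ((primitive v y - primitive v x) ^ (1 / a)) hx hxy hy (by positivity)
  set D := primitive v y - primitive v x
  have hnear : (D ^ (1 / a)) ^ (a - 2 * s) = D ^ ((a - 2 * s) / a) := by
    rw [← rpow_mul hD.le, one_div_mul_eq_div]
  have hfar : (D ^ (1 / a)) ^ (-(2 * s)) * D = D ^ ((a - 2 * s) / a) := by
    rw [← rpow_mul hD.le, ← rpow_add_one hD.ne']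
    congr 1
    field_simp
    ring
  rwa [hfar, hnear, ← two_mul, mul_left_comm, ← mul_assoc] at hδ

lemma exists_abs_fracLapIntegral_sub_le (h : IsProfile s a K v) (hs : 0 < s) (ha : a ≤ 1)
    (hsa : 2 * s < a) : ∃ C, 0 ≤ C ∧ ∀ x y,
      |fracLapIntegral s (primitive v) x - fracLapIntegral s (primitive v) y| ≤
        C * |primitive v x - primitive v y| ^ ((a - 2 * s) / a) := by
  have ha0 : 0 < a := by linarith
  have hquarter := h.isQuarterWave_primitive hs.le ha0 ha
  obtain ⟨C, hC, hle⟩ := h.exists_abs_fracLapIntegral_sub_le_rpow hs ha hsa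
  exact ⟨2 * C, by positivity, (isQuarterWave_fracLapIntegral hquarter).abs_sub_le_rpow hquarter hC
    (div_nonneg (by linarith) ha0.le)
    ((h.strictMonoOn_primitive hs.le ha0 ha).monotoneOn.mono (Icc_subset_Icc_right
      (half_le_self pi_pos.le))) hle⟩

lemma memCalpha_primitive (h : IsProfile s a K v) (hs : 0 ≤ s) (ha0 : 0 < a) (ha : a ≤ 1)
    (hcont : a = 1 → Continuous v) : MemCalpha a univ (primitive v) := by
  rcases ha.lt_or_eq with ha1 | rfl
  · obtain ⟨C, hC, hle⟩ := h.exists_abs_primitive_sub_le hs ha0 ha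
    exact memCalpha_of_abs_sub_le hC ha0 ha1 (fun x _ y _ => hle x y)
      fun x _ => h.abs_primitive_le hs ha0 ha x
  · have hv := hcont rfl
    obtain ⟨M, hM⟩ := isBounded_iff_forall_norm_le.1
      (h.antiperiodic.periodic_two_mul.isBounded_of_continuous (by positivity) hv)
    exact memCalpha_one_of_hasDerivAt (fun x => (hv.integral_hasStrictDerivAt 0 x).hasDerivAt) hv
      (h.abs_primitive_le hs ha0 ha) fun x => hM _ (mem_range_self x)

lemma mul_rpow_le_primitive (h : IsProfile s a K v) (hs : 0 ≤ s) (ha0 : 0 < a) (ha : a ≤ 1)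
    {b c r x : ℝ} (hb : -1 < b) (hle : ∀ t, 0 < t → t ≤ r → c * t ^ b ≤ v t) (hx : 0 ≤ x)
    (hxr : x ≤ r) : c / (b + 1) * x ^ (b + 1) ≤ primitive v x := by
  calc c / (b + 1) * x ^ (b + 1) = ∫ t in 0..x, c * t ^ b := by
        rw [intervalIntegral.integral_const_mul, integral_rpow (Or.inl hb),
          zero_rpow (by linarith)]
        ring
    _ ≤ primitive v x := intervalIntegral.integral_mono_on_of_le_Ioo hx
        ((intervalIntegral.intervalIntegrable_rpow' hb).const_mul c)
        (h.intervalIntegrable hs ha0 ha 0 x) fun t ht => hle t ht.1 (ht.2.le.trans hxr)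

-- For `a = 1` the growth of `v` contradicts Hölder continuity of the derivative, not of `u`.
lemma not_memCalpha_primitive (h : IsProfile s a K v) (hs : 0 ≤ s) (ha0 : 0 < a) (ha : a ≤ 1)
    (hcont : a = 1 → Continuous v) {r : ℝ} (hr : 0 < r)
    (hle : ∀ η, 0 < η → ∃ c, 0 < c ∧ ∀ t, 0 < t → t ≤ r → c * t ^ (a - 1 + η) ≤ v t) {ε ρ : ℝ}
    (hε : 0 < ε) (hρ : 0 < ρ) : ¬ MemCalpha (a + ε) (Icc (-ρ) ρ) (primitive v) := by
  rcases ha.lt_or_eq with ha1 | rfl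
  · refine not_memCalpha_of_mul_rpow_le (b := a) (by linarith) (lt_min (by linarith) ha1)
      (lt_min hr hρ) (min_le_right r ρ) (primitive_zero v) fun η hη => ?_
    obtain ⟨c, hc, hcv⟩ := hle η hη
    refine ⟨c / (a - 1 + η + 1), div_pos hc (by linarith), fun x hx hxr => ?_⟩
    have hx' := h.mul_rpow_le_primitive hs ha0 ha (by linarith) hcv hx.le
      (hxr.trans (min_le_left r ρ))
    rwa [show a - 1 + η + 1 = a + η by ring] at hx' ⊢
  · have hU : UniqueDiffOn ℝ (Icc (-ρ) ρ) := uniqueDiffOn_Icc (by linarith)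
    have hderiv : ∀ x ∈ Icc (-ρ) ρ, derivWithin (primitive v) (Icc (-ρ) ρ) x = v x := fun x hx =>
      ((hcont rfl).integral_hasStrictDerivAt 0 x).hasDerivAt.hasDerivWithinAt.derivWithin (hU x hx)
    intro hmem
    refine not_memCalpha_of_mul_rpow_le (b := 0) (by linarith)
      (lt_min (by linarith) one_pos) (lt_min hr hρ) (min_le_right r ρ)
      ((hderiv 0 ⟨by linarith, hρ.le⟩).trans h.odd.map_zero) (fun η hη => ?_)
      (hmem.derivWithin (by linarith) hU)
    obtain ⟨c, hc, hcv⟩ := hle η hη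
    refine ⟨c, hc, fun x hx hxr => ?_⟩
    rw [hderiv x ⟨by linarith, hxr.trans (min_le_right r ρ)⟩]
    simpa only [sub_self] using hcv x hx (hxr.trans (min_le_left r ρ))

lemma exists_memCalpha_forall_hasFracLapAt (h : IsProfile s a K v) (hs : 0 < s) (ha : a ≤ 1)
    (hsa : 2 * s < a) : ∃ f, MemCalpha ((a - 2 * s) / a) univ f ∧
      ∀ x, HasFracLapAt s (primitive v) x (f (primitive v x)) := by
  have ha0 : 0 < a := by linarith
  obtain ⟨H, -, hH⟩ := h.exists_abs_primitive_sub_le hs.le ha0 ha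
  obtain ⟨C, hC, hle⟩ := h.exists_abs_fracLapIntegral_sub_le hs ha hsa
  obtain ⟨f, hf, hfu⟩ := exists_memCalpha_factor (h.range_primitive hs.le ha0 ha)
    (w := fun x => fracLapCoef s * fracLapIntegral s (primitive v) x)
    (mul_nonneg (abs_nonneg (fracLapCoef s)) hC) (div_pos (sub_pos.2 hsa) ha0)
    ((div_lt_one ha0).2 (by linarith)) fun x y => by
      rw [← mul_sub, abs_mul, mul_assoc]
      exact mul_le_mul_of_nonneg_left (hle x y) (abs_nonneg _)
  refine ⟨f, hf, fun x => ?_⟩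
  rw [hfu]
  exact hasFracLapAt_fracLapIntegral (integrable_fracLapIntegrand
    (h.continuous_primitive hs.le ha0 ha).measurable (h.abs_primitive_le hs.le ha0 ha) hH hs hsa x)

end IsProfile

end Profile

section LogPower

open Real

/-- The odd function equal to `y ^ (a - 1) / (1 / s - log y)` for `0 < y ≤ 1`: the power `a - 1`
times a logarithmic factor, which makes it larger than `y ^ (a - 1 + η)` near `0` for every
`0 < η`, yet continuous at `0` for `a = 1`. Composed with `sin`, it is the derivative of the
function `u` of the theorem. -/
noncomputable def logPower (s a y : ℝ) : ℝ :=
  y * |y| ^ (a - 2) / (1 / s - log y)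

variable {s a y z η t p : ℝ}

lemma logPower_zero (s a : ℝ) : logPower s a 0 = 0 := by
  rw [logPower, zero_mul, zero_div]

lemma logPower_neg (s a y : ℝ) : logPower s a (-y) = -logPower s a y := by
  simp only [logPower, abs_neg, log_neg_eq_log, neg_mul, neg_div]

lemma logPower_of_pos (s a : ℝ) (hy : 0 < y) :
    logPower s a y = y ^ (a - 1) / (1 / s - log y) := by
  rw [logPower, abs_of_pos hy, mul_comm, ← rpow_add_one hy.ne']
  ring_nf

lemma one_div_sub_log_pos (hs : 0 < s) (hy : |y| ≤ 1) : 0 < 1 / s - log y := by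
  have := log_nonpos (abs_nonneg y) hy
  rw [log_abs] at this
  linarith [one_div_pos.2 hs]

lemma logPower_pos (a : ℝ) (hs : 0 < s) (hy : 0 < y) (hy1 : y ≤ 1) : 0 < logPower s a y := by
  rw [logPower_of_pos s a hy]
  exact div_pos (rpow_pos_of_pos hy _) (one_div_sub_log_pos hs (by rwa [abs_of_pos hy]))

lemma abs_logPower (a : ℝ) (hs : 0 < s) (hy : y ≠ 0) (hy1 : |y| ≤ 1) :
    |logPower s a y| = logPower s a |y| := by
  have hpos := logPower_pos a hs (abs_pos.2 hy) hy1
  rcases abs_choice y with h | h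
  · rw [h] at hpos ⊢
    exact abs_of_pos hpos
  · rw [h] at hpos ⊢
    rw [← abs_neg, ← logPower_neg, abs_of_pos hpos]

lemma one_div_sub_log_le_mul (hs : 0 < s) (hy : 0 < y) (hyz : y ≤ z) (hz : z ≤ 1) :
    1 / s - log y ≤ (z / y) ^ s * (1 / s - log z) := by
  have hz0 : 0 < z := hy.trans_le hyz
  have hlog : s * (log z - log y) ≤ (z / y) ^ s - 1 := by
    rw [← log_div hz0.ne' hy.ne', ← log_rpow (by positivity)]
    exact log_le_sub_one_of_pos (by positivity)
  have hone : 1 ≤ (z / y) ^ s := one_le_rpow ((one_le_div hy).2 hyz) hs.le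
  calc 1 / s - log y = 1 / s - log z + s * (log z - log y) / s := by
        rw [mul_div_cancel_left₀ _ hs.ne']
        ring
    _ ≤ 1 / s - log z + ((z / y) ^ s - 1) / s := by gcongr
    _ ≤ 1 / s - log z + ((z / y) ^ s - 1) * (1 / s - log z) := by
        rw [div_eq_mul_one_div ((z / y) ^ s - 1)]
        gcongr
        linarith [log_nonpos hz0.le hz]
    _ = (z / y) ^ s * (1 / s - log z) := by ring

lemma logPower_le_mul (hs : 0 < s) (ha : a ≤ 1) (hy : 0 < y) (hy1 : y ≤ 1) (hz : 0 < z)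
    (hz1 : z ≤ 1) : logPower s a z ≤ logPower s a y * ((z / y) ^ s + (z / y) ^ (a - 1)) := by
  have hy' := one_div_sub_log_pos hs (abs_le.2 ⟨by linarith, hy1⟩)
  have hz' := one_div_sub_log_pos hs (abs_le.2 ⟨by linarith, hz1⟩)
  have hpos := logPower_pos a hs hy hy1
  rcases le_total y z with hyz | hzy
  · calc logPower s a z ≤ logPower s a y * (z / y) ^ s := by
          rw [logPower_of_pos s a hy, logPower_of_pos s a hz, div_mul_eq_mul_div,
            div_le_div_iff₀ hz' hy', mul_assoc]
          exact mul_le_mul (rpow_le_rpow_of_nonpos hy hyz (by linarith))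
            (one_div_sub_log_le_mul hs hy hyz hz1) hy'.le (by positivity)
      _ ≤ logPower s a y * ((z / y) ^ s + (z / y) ^ (a - 1)) := by
          gcongr
          exact le_add_of_nonneg_right (by positivity)
  · calc logPower s a z ≤ z ^ (a - 1) / (1 / s - log y) := by
          rw [logPower_of_pos s a hz]
          gcongr
      _ = logPower s a y * (z / y) ^ (a - 1) := by
          rw [logPower_of_pos s a hy, div_mul_eq_mul_div, ← mul_rpow hy.le (by positivity),
            mul_div_cancel₀ _ hy.ne']
      _ ≤ logPower s a y * ((z / y) ^ s + (z / y) ^ (a - 1)) := by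
          gcongr
          exact le_add_of_nonneg_left (by positivity)

lemma mul_rpow_le_logPower (a : ℝ) (hs : 0 < s) (hη : 0 < η) (hy : 0 < y) (hy1 : y ≤ 1) :
    (1 / s + 1 / η)⁻¹ * y ^ (a - 1 + η) ≤ logPower s a y := by
  have hlog : -log y ≤ 1 / η * y ^ (-η) := by
    have := log_le_rpow_div (inv_pos.2 hy).le hη
    rwa [log_inv, inv_rpow hy.le, ← rpow_neg hy.le, div_eq_inv_mul, ← one_div] at this
  have hone : 1 / s ≤ 1 / s * y ^ (-η) :=
    le_mul_of_one_le_right (by positivity)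
      (one_le_rpow_of_pos_of_le_one_of_nonpos hy hy1 (by linarith))
  rw [logPower_of_pos s a hy, le_div_iff₀ (one_div_sub_log_pos hs (by rwa [abs_of_pos hy]))]
  calc (1 / s + 1 / η)⁻¹ * y ^ (a - 1 + η) * (1 / s - log y)
      ≤ (1 / s + 1 / η)⁻¹ * y ^ (a - 1 + η) * ((1 / s + 1 / η) * y ^ (-η)) := by
        gcongr
        linarith
    _ = y ^ (a - 1) := by
        rw [rpow_add hy, rpow_neg hy.le]
        field_simp

lemma tendsto_logPower_one_zero (s : ℝ) :
    Tendsto (logPower s 1) (nhdsWithin 0 {0}ᶜ) (nhds 0) := by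
  have hinv : Tendsto (fun y => |(1 / s - log y)⁻¹|) (nhdsWithin 0 {0}ᶜ) (nhds 0) := by
    simpa only [abs_zero, Function.comp_apply, ← sub_eq_add_neg] using
      (tendsto_inv_atTop_zero.comp (tendsto_atTop_add_const_left _ (1 / s)
        (tendsto_neg_atBot_atTop.comp tendsto_log_nhdsNE_zero))).abs
  refine squeeze_zero_norm (fun y => ?_) hinv
  have hsign : |y * |y| ^ ((1 : ℝ) - 2)| ≤ 1 := by
    rw [show (1 : ℝ) - 2 = -1 by norm_num, rpow_neg_one, abs_mul, abs_inv, abs_abs]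
    exact mul_inv_le_one
  rw [logPower, norm_eq_abs, div_eq_mul_inv, abs_mul]
  exact mul_le_of_le_one_left (abs_nonneg _) hsign

lemma continuousOn_logPower_one (hs : 0 < s) : ContinuousOn (logPower s 1) (Icc (-1) 1) := by
  intro y hy
  refine ContinuousAt.continuousWithinAt ?_
  rcases eq_or_ne y 0 with rfl | hy0
  · rw [continuousAt_iff_punctured_nhds, logPower_zero]
    exact tendsto_logPower_one_zero s
  · exact (continuousAt_id.mul (continuous_abs.continuousAt.rpow_const
      (Or.inl (abs_ne_zero.2 hy0)))).div (continuousAt_const.sub (continuousAt_log hy0))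
      (one_div_sub_log_pos hs (abs_le.2 hy)).ne'

lemma abs_div_five_le_abs_sin (hp : |p| ≤ 3 * π / 4) : |p| / 5 ≤ |sin p| := by
  rw [abs_sin_eq_sin_abs_of_abs_le_pi (by linarith [pi_pos])]
  have hdiv : 1 / 5 ≤ 2 / π := by
    rw [div_le_div_iff₀ (by norm_num) pi_pos]
    linarith [pi_le_four]
  rcases le_total |p| (π / 2) with h | h
  · calc |p| / 5 = 1 / 5 * |p| := by ring
      _ ≤ 2 / π * |p| := by gcongr
      _ ≤ sin |p| := mul_le_sin (abs_nonneg p) h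
  · calc |p| / 5 ≤ 1 / 2 := by linarith [pi_lt_d2]
      _ = 2 / π * (π / 4) := by field_simp; norm_num
      _ ≤ 2 / π * (π - |p|) := by gcongr; linarith
      _ ≤ sin |p| := sin_pi_sub |p| ▸ mul_le_sin (by linarith [pi_pos]) (by linarith)

lemma div_five_le_sin (ht : 0 < t) (ht' : t ≤ π / 2) : t / 5 ≤ sin t := by
  have := abs_div_five_le_abs_sin (p := t) (by rw [abs_of_pos ht]; linarith [pi_pos])
  rwa [abs_of_pos ht, abs_of_nonneg (sin_nonneg_of_nonneg_of_le_pi ht.le (by linarith))] at this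

lemma exists_mul_rpow_le_logPower_sin (hs : 0 < s) (ha : a ≤ 1) (hη : 0 < η) :
    ∃ c, 0 < c ∧ ∀ t, 0 < t → t ≤ 1 → c * t ^ (a - 1 + η) ≤ logPower s a (sin t) := by
  refine ⟨(1 / s + 1 / η)⁻¹ * (1 / 5) ^ η, by positivity, fun t ht ht1 => ?_⟩
  have hlow := div_five_le_sin ht (by linarith [pi_gt_three])
  have hsin : 0 < sin t := by linarith
  calc (1 / s + 1 / η)⁻¹ * (1 / 5) ^ η * t ^ (a - 1 + η)
      = (1 / s + 1 / η)⁻¹ * (t ^ (a - 1) * (t / 5) ^ η) := by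
        rw [rpow_add ht, div_rpow ht.le (by norm_num), div_rpow one_pos.le (by norm_num), one_rpow]
        ring
    _ ≤ (1 / s + 1 / η)⁻¹ * (sin t ^ (a - 1) * sin t ^ η) := by
        gcongr ?_ * (?_ * ?_ ^ η)
        exact rpow_le_rpow_of_nonpos hsin (sin_le ht.le) (by linarith)
    _ = (1 / s + 1 / η)⁻¹ * sin t ^ (a - 1 + η) := by rw [rpow_add hsin]
    _ ≤ logPower s a (sin t) := mul_rpow_le_logPower a hs hη hsin (sin_le_one t)

lemma abs_sin_div_sin_rpow_le (hs : 0 ≤ s) (hs1 : s ≤ 1) (ht : 0 < t) (ht' : t ≤ π / 2) (p : ℝ) :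
    (|sin p| / sin t) ^ s ≤ 5 * (|p| / t) ^ s := by
  have hsin := div_five_le_sin ht ht'
  calc (|sin p| / sin t) ^ s ≤ (|p| / (t / 5)) ^ s := by
        have hpos : 0 < sin t := by linarith
        have := abs_sin_le_abs (x := p)
        gcongr
    _ = 5 ^ s * (|p| / t) ^ s := by
        rw [div_div_eq_mul_div, mul_div_right_comm, mul_comm,
          mul_rpow (by norm_num) (by positivity)]
    _ ≤ 5 * (|p| / t) ^ s := by
        gcongr
        exact rpow_le_self_of_one_le (by norm_num) hs1

lemma abs_sin_div_sin_rpow_sub_one_le (ha0 : 0 ≤ a) (ha : a ≤ 1) (ht : 0 < t) (ht' : t ≤ π / 2)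
    (hp0 : p ≠ 0) (hp : |p| ≤ 3 * π / 4) :
    (|sin p| / sin t) ^ (a - 1) ≤ 5 * (|p| / t) ^ (a - 1) := by
  have := abs_pos.2 hp0
  have hsin := div_five_le_sin ht ht'
  calc (|sin p| / sin t) ^ (a - 1) ≤ (|p| / 5 / t) ^ (a - 1) := by
        refine rpow_le_rpow_of_nonpos (by positivity) ?_ (by linarith)
        exact div_le_div₀ (abs_nonneg _) (abs_div_five_le_abs_sin hp) (by linarith) (sin_le ht.le)
    _ = 5 ^ (1 - a) * (|p| / t) ^ (a - 1) := by
        rw [div_right_comm, div_rpow (by positivity) (by norm_num), ← neg_sub a,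
          rpow_neg (by norm_num), div_eq_inv_mul]
    _ ≤ 5 * (|p| / t) ^ (a - 1) := by
        gcongr
        exact rpow_le_self_of_one_le (by norm_num) (by linarith)

lemma isProfile_logPower_sin (hs : 0 < s) (hs1 : s ≤ 1) (ha0 : 0 ≤ a) (ha : a ≤ 1) :
    IsProfile s a 5 fun t => logPower s a (sin t) where
  measurable := by
    unfold logPower
    fun_prop
  odd t := by simp only [sin_neg, logPower_neg]
  antiperiodic t := by simp only [sin_add_pi, logPower_neg]
  pos t ht ht' := logPower_pos a hs (sin_pos_of_pos_of_lt_pi ht ht') (sin_le_one t)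
  abs_le_mul t p ht ht' hp0 hp := by
    have hsint : 0 < sin t := by linarith [div_five_le_sin ht ht']
    have hsinp : 0 < |sin p| := by linarith [abs_div_five_le_abs_sin hp, abs_pos.2 hp0]
    have hpos := logPower_pos a hs hsint (sin_le_one t)
    calc |logPower s a (sin p)| = logPower s a |sin p| :=
          abs_logPower a hs (abs_pos.1 hsinp) (abs_sin_le_one p)
      _ ≤ logPower s a (sin t) * ((|sin p| / sin t) ^ s + (|sin p| / sin t) ^ (a - 1)) :=
          logPower_le_mul hs ha hsint (sin_le_one t) hsinp (abs_sin_le_one p)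
      _ ≤ logPower s a (sin t) * (5 * (|p| / t) ^ s + 5 * (|p| / t) ^ (a - 1)) := by
          gcongr
          · exact abs_sin_div_sin_rpow_le hs.le hs1 ht ht' p
          · exact abs_sin_div_sin_rpow_sub_one_le ha0 ha ht ht' hp0 hp
      _ = 5 * logPower s a (sin t) * ((|p| / t) ^ s + (|p| / t) ^ (a - 1)) := by ring

lemma continuous_logPower_one_sin (hs : 0 < s) : Continuous fun t => logPower s 1 (sin t) :=
  (continuousOn_logPower_one hs).comp_continuous continuous_sin sin_mem_Icc

end LogPower

theorem stmt11 (s β : ℝ) (hβ0 : 0 < β) (hβ1 : β < 1) (hs0 : 0 < s) (h : 2 * s ≤ 1 - β) :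
    ∃ u f : ℝ → ℝ,
      (∃ T : ℝ, 0 < T ∧ Function.Periodic u T) ∧
      MemCalpha (2 * s / (1 - β)) Set.univ u ∧
      MemCalpha β Set.univ f ∧
      (∀ x : ℝ, HasFracLapAt s u x (f (u x))) ∧
      (∀ ε ρ : ℝ, 0 < ε → 0 < ρ →
        ¬ MemCalpha (2 * s / (1 - β) + ε) (Set.Icc (-ρ) ρ) u) := by
  have hβ : 0 < 1 - β := sub_pos.2 hβ1
  obtain ⟨a, ha_def⟩ : ∃ a, a = 2 * s / (1 - β) := ⟨_, rfl⟩
  have hs_eq : 2 * s = a * (1 - β) := by rw [ha_def, div_mul_cancel₀ _ hβ.ne']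
  have ha0 : 0 < a := ha_def ▸ by positivity
  have ha : a ≤ 1 := ha_def ▸ (div_le_one hβ).2 h
  have hsa : 2 * s < a := by nlinarith
  have hexp : (a - 2 * s) / a = β := by
    rw [hs_eq]
    field_simp
    ring
  have hv := isProfile_logPower_sin hs0 (by linarith) ha0.le ha
  have hcont : a = 1 → Continuous fun t => logPower s a (Real.sin t) := fun h1 =>
    h1 ▸ continuous_logPower_one_sin hs0
  obtain ⟨f, hf, hfu⟩ := hv.exists_memCalpha_forall_hasFracLapAt hs0 ha hsa
  rw [← ha_def]
  exact ⟨_, f, ⟨_, Real.two_pi_pos, (hv.isQuarterWave_primitive hs0.le ha0 ha).periodic⟩,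
    hv.memCalpha_primitive hs0.le ha0 ha hcont, hexp ▸ hf, hfu, fun ε ρ =>
      hv.not_memCalpha_primitive hs0.le ha0 ha hcont one_pos fun η =>
        exists_mul_rpow_le_logPower_sin hs0 ha⟩
end

section
/- Let 0<s<1, 0<β<1 with 2s < 1-β, and set r := 2s/(1-β) (so 0<2s<r<1). Let u:ℝ→ℝ be an 8-periodic function satisfying: (a) u(x) = -|x|^r for -1<x<0 and u(x) = x^r for 0≤x<1; (b) u is C^∞ on (-4,0)∪(0,4); (c) u is strictly increasing on (0,2); (d) u is odd with respect to x=0 and even with respect to x=2, i.e. u(-x)=-u(x) and u(2+x)=u(2-x) for all x; (e) sup{u'(x) : x ∈ (1,2)} = u'(1) = inf{u'(x) : x ∈ (0,1)}; (f) there exists δ>0 such that u(x) = -(x-2)² + u(2) for all x ∈ (2-δ, 2+δ). Define H(x) := ∫_{ℝ∖(-1/2,1/2)} (u(x+y) - u(x)) |y|^{-1-2s} dy. Then the map t ↦ H(t^{1/r}) is Lipschitz continuous on [0, 2^{-r}]. -/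
open MeasureTheory Filter Set

/-! Substituting `z = x + y` moves the shift in `∫ k(y) u(x + y) dy` from the merely Hölder function
`u` to the kernel `k`, so the integral is Lipschitz in `x` as soon as `u` is bounded and the
translates of `k` are Lipschitz in `L¹`. The truncated kernel `1_{|y| ≥ ρ} |y|^{-p}` has this
property, being of bounded variation. Hence `H = (Lipschitz function) - (∫ k) u`, and composing with
`t ↦ t ^ (1 / r)`, which is Lipschitz near `0`, turns the profile `u(x) = x ^ r` into the
identity. -/

section Translation

variable {G E : Type*} [AddGroup G] [MeasurableSpace G] [MeasurableAdd G]
  {μ : Measure G} [μ.IsAddLeftInvariant] [NormedAddCommGroup E] [NormedSpace ℝ E]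
  {k : G → ℝ} {u : G → E} {M : ℝ}

lemma integrable_smul_comp_add_left (hk : Integrable k μ) (hu : AEStronglyMeasurable u μ)
    (hM : ∀ x, ‖u x‖ ≤ M) (x : G) : Integrable (fun y => k y • u (x + y)) μ :=
  hk.smul_bdd M (hu.comp_measurePreserving (measurePreserving_add_left μ x))
    (Eventually.of_forall fun y => hM (x + y))

lemma integral_smul_comp_add_left_eq (x : G) :
    ∫ y, k y • u (x + y) ∂μ = ∫ z, k (-x + z) • u z ∂μ := by
  simpa only [neg_add_cancel_left] using
    integral_add_left_eq_self (μ := μ) (fun z => k (-x + z) • u z) x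

lemma norm_integral_smul_comp_add_left_sub_le (hk : Integrable k μ)
    (hu : AEStronglyMeasurable u μ) (hM : ∀ x, ‖u x‖ ≤ M) (x x' : G) :
    ‖∫ y, k y • u (x + y) ∂μ - ∫ y, k y • u (x' + y) ∂μ‖
      ≤ M * ∫ z, |k (-x + z) - k (-x' + z)| ∂μ := by
  have hshift (a : G) : Integrable (fun z => k (-a + z)) μ := hk.comp_add_left (-a)
  have hint (a : G) : Integrable (fun z => k (-a + z) • u z) μ :=
    (hshift a).smul_bdd M hu (Eventually.of_forall hM)
  rw [integral_smul_comp_add_left_eq, integral_smul_comp_add_left_eq,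
    ← integral_sub (hint x) (hint x'), ← integral_const_mul]
  refine norm_integral_le_of_norm_le (((hshift x).sub (hshift x')).abs.const_mul M)
    (Eventually.of_forall fun z => ?_)
  rw [← sub_smul, norm_smul, Real.norm_eq_abs, mul_comm]
  exact mul_le_mul_of_nonneg_right (hM z) (abs_nonneg _)

lemma integral_smul_comp_add_left_sub_self [CompleteSpace E] (hk : Integrable k μ)
    (hu : AEStronglyMeasurable u μ) (hM : ∀ x, ‖u x‖ ≤ M) (x : G) :
    ∫ y, k y • (u (x + y) - u x) ∂μ = ∫ y, k y • u (x + y) ∂μ - (∫ y, k y ∂μ) • u x := by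
  simp only [smul_sub]
  rw [integral_sub (integrable_smul_comp_add_left hk hu hM x) (hk.smul_const (u x)),
    integral_smul_const]

end Translation

-- The indicator decreases except for its jump at `a`, which the shift spreads over `[a - h, a)`.
lemma abs_indicator_Ici_add_sub_le {k : ℝ → ℝ} {a h : ℝ} (hanti : AntitoneOn k (Ici a))
    (hk0 : ∀ y ∈ Ici a, 0 ≤ k y) (hh : 0 ≤ h) (y : ℝ) :
    |(Ici a).indicator k (h + y) - (Ici a).indicator k y|
      ≤ (Ici a).indicator k y - (Ici a).indicator k (h + y)
        + (Ico (a - h) a).indicator (fun _ => 2 * k a) y := by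
  rcases lt_or_ge y a with hy | hy
  · by_cases hya : a ≤ h + y
    · have hle : k (h + y) ≤ k a := hanti self_mem_Ici hya hya
      have hmem : y ∈ Ico (a - h) a := ⟨by linarith, hy⟩
      rw [indicator_of_mem (mem_Ici.2 hya), indicator_of_notMem (notMem_Ici.2 hy),
        indicator_of_mem hmem, sub_zero, abs_of_nonneg (hk0 _ hya)]
      linarith
    · have hnotMem : y ∉ Ico (a - h) a := fun hmem => hya (by linarith [hmem.1])
      simp [hy, hnotMem, hya]
  · have hya : a ≤ h + y := by linarith
    have hle : k (h + y) ≤ k y := hanti hy hya (by linarith)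
    have hnotMem : y ∉ Ico (a - h) a := fun hmem => hy.not_gt hmem.2
    rw [indicator_of_mem (mem_Ici.2 hya), indicator_of_mem (mem_Ici.2 hy),
      indicator_of_notMem hnotMem, add_zero, abs_of_nonpos (sub_nonpos.2 hle), neg_sub]

/-- An integrable function on the line whose translates depend Lipschitz-continuously on the shift
in the `L¹` norm, with constant `L`; for `L¹` functions this amounts to having essential variation
at most `L`. -/
structure IsLOneTranslationLipschitz (L : ℝ) (k : ℝ → ℝ) : Prop where
  integrable : Integrable k
  integral_abs_sub_le : ∀ h, ∫ y, |k (h + y) - k y| ≤ L * |h|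

namespace IsLOneTranslationLipschitz

variable {L L' M : ℝ} {k l : ℝ → ℝ}

lemma of_nonneg (hk : Integrable k) (h : ∀ h, 0 ≤ h → ∫ y, |k (h + y) - k y| ≤ L * h) :
    IsLOneTranslationLipschitz L k where
  integrable := hk
  integral_abs_sub_le a := by
    rcases le_total 0 a with ha | ha
    · simpa only [abs_of_nonneg ha] using h a ha
    · have := h (-a) (neg_nonneg.2 ha)
      rw [← integral_add_left_eq_self _ a] at this
      simpa only [neg_add_cancel_left, abs_of_nonpos ha, abs_sub_comm] using this

lemma add (hk : IsLOneTranslationLipschitz L k) (hl : IsLOneTranslationLipschitz L' l) :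
    IsLOneTranslationLipschitz (L + L') (fun y => k y + l y) where
  integrable := hk.integrable.add hl.integrable
  integral_abs_sub_le h := by
    have hk' := ((hk.integrable.comp_add_left h).sub hk.integrable).abs
    have hl' := ((hl.integrable.comp_add_left h).sub hl.integrable).abs
    calc ∫ y, |k (h + y) + l (h + y) - (k y + l y)|
        ≤ ∫ y, (|k (h + y) - k y| + |l (h + y) - l y|) :=
          integral_mono_of_nonneg (Eventually.of_forall fun _ => abs_nonneg _) (hk'.add hl')
            (Eventually.of_forall fun y => by
              simpa only [add_sub_add_comm] using abs_add_le (k (h + y) - k y) (l (h + y) - l y))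
      _ = (∫ y, |k (h + y) - k y|) + ∫ y, |l (h + y) - l y| := integral_add hk' hl'
      _ ≤ (L + L') * |h| := by
          linarith [hk.integral_abs_sub_le h, hl.integral_abs_sub_le h]

lemma comp_neg (hk : IsLOneTranslationLipschitz L k) :
    IsLOneTranslationLipschitz L (fun y => k (-y)) where
  integrable := hk.integrable.comp_neg
  integral_abs_sub_le h := by
    rw [← integral_neg_eq_self (fun y => |k (-(h + y)) - k (-y)|)]
    simpa only [neg_add, neg_neg, abs_neg] using hk.integral_abs_sub_le (-h)

lemma indicator_Ici {a : ℝ} (hanti : AntitoneOn k (Ici a)) (hk0 : ∀ y ∈ Ici a, 0 ≤ k y)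
    (hk : IntegrableOn k (Ici a)) :
    IsLOneTranslationLipschitz (2 * k a) ((Ici a).indicator k) := by
  set K := (Ici a).indicator k
  have hK : Integrable K := hk.integrable_indicator measurableSet_Ici
  refine of_nonneg hK fun h hh => ?_
  have hjump : Integrable ((Ico (a - h) a).indicator fun _ => 2 * k a) :=
    (integrableOn_const (by simp)).integrable_indicator measurableSet_Ico
  have hdiff := hK.sub (hK.comp_add_left h)
  calc ∫ y, |K (h + y) - K y|
      ≤ ∫ y, (K y - K (h + y) + (Ico (a - h) a).indicator (fun _ => 2 * k a) y) :=
        integral_mono_of_nonneg (Eventually.of_forall fun _ => abs_nonneg _) (hdiff.add hjump)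
          (Eventually.of_forall fun y => abs_indicator_Ici_add_sub_le hanti hk0 hh y)
    _ = (∫ y, (K y - K (h + y))) + ∫ y, (Ico (a - h) a).indicator (fun _ => 2 * k a) y :=
        integral_add hdiff hjump
    _ = 2 * k a * h := by
        rw [integral_sub hK (hK.comp_add_left h), integral_add_left_eq_self, sub_self, zero_add,
          integral_indicator_const _ measurableSet_Ico, measureReal_def, Real.volume_Ico,
          sub_sub_cancel, ENNReal.toReal_ofReal hh, smul_eq_mul, mul_comm]

lemma indicator_le_abs {ρ : ℝ} (hρ : 0 < ρ) (hanti : AntitoneOn k (Ici ρ))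
    (hk0 : ∀ y ∈ Ici ρ, 0 ≤ k y) (hk : IntegrableOn k (Ici ρ)) :
    IsLOneTranslationLipschitz (4 * k ρ) ({y | ρ ≤ |y|}.indicator fun y => k |y|) := by
  have hhalf := indicator_Ici hanti hk0 hk
  have hsplit : ({y | ρ ≤ |y|}.indicator fun y => k |y|) =
      fun y => (Ici ρ).indicator k y + (Ici ρ).indicator k (-y) := by
    ext y
    rcases le_total 0 y with hy | hy
    · simp [indicator, abs_of_nonneg hy, show ¬ ρ ≤ -y by linarith]
    · simp [indicator, abs_of_nonpos hy, show ¬ ρ ≤ y by linarith]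
  rw [hsplit, show 4 * k ρ = 2 * k ρ + 2 * k ρ by ring]
  exact hhalf.add hhalf.comp_neg

lemma indicator_abs_rpow {ρ p : ℝ} (hρ : 0 < ρ) (hp : 1 < p) :
    IsLOneTranslationLipschitz (4 * ρ ^ (-p)) ({y | ρ ≤ |y|}.indicator fun y => |y| ^ (-p)) :=
  indicator_le_abs (k := fun y => y ^ (-p)) hρ
    (fun _ hy _ _ hyz => Real.rpow_le_rpow_of_nonpos (hρ.trans_le hy) hyz (by linarith))
    (fun _ hy => Real.rpow_nonneg (hρ.le.trans hy) _)
    ((integrableOn_Ici_iff_integrableOn_Ioi (by simp)).2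
      (integrableOn_Ioi_rpow_of_lt (by linarith) hρ))

variable {E : Type*} [NormedAddCommGroup E] [NormedSpace ℝ E] {u : ℝ → E}

lemma lipschitzWith_integral_smul (hk : IsLOneTranslationLipschitz L k)
    (hu : AEStronglyMeasurable u) (hM : ∀ x, ‖u x‖ ≤ M) :
    LipschitzWith (M * L).toNNReal (fun x => ∫ y, k y • u (x + y)) := by
  have hM0 : 0 ≤ M := (norm_nonneg _).trans (hM 0)
  refine LipschitzWith.of_dist_le' fun x x' => ?_
  have htranslate : ∫ z, |k (-x + z) - k (-x' + z)| ≤ L * |x - x'| := by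
    rw [← integral_add_left_eq_self _ x']
    simpa only [neg_add_cancel_left, ← add_assoc (-x), neg_add_eq_sub x, abs_sub_comm x x'] using
      hk.integral_abs_sub_le (x' - x)
  rw [dist_eq_norm, Real.dist_eq, mul_assoc]
  exact (norm_integral_smul_comp_add_left_sub_le hk.integrable hu hM x x').trans
    (mul_le_mul_of_nonneg_left htranslate hM0)

lemma lipschitzOnWith_integral_smul_sub_comp [CompleteSpace E] {X : Type*}
    [PseudoEMetricSpace X] {T : Set X} {g : X → ℝ} {A B : NNReal}
    (hk : IsLOneTranslationLipschitz L k)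
    (hu : AEStronglyMeasurable u) (hM : ∀ x, ‖u x‖ ≤ M) (hg : LipschitzOnWith A g T)
    (hug : LipschitzOnWith B (fun t => u (g t)) T) :
    LipschitzOnWith ((M * L).toNNReal * A + ‖∫ y, k y‖₊ * B)
      (fun t => ∫ y, k y • (u (g t + y) - u (g t))) T := by
  simp only [integral_smul_comp_add_left_sub_self hk.integrable hu hM]
  exact ((hk.lipschitzWith_integral_smul hu hM).comp_lipschitzOnWith hg).sub
    ((lipschitzWith_smul _).comp_lipschitzOnWith hug)

end IsLOneTranslationLipschitz

section Reflection

variable {E : Type*} [InvolutiveNeg E] {f : ℝ → E} {c : ℝ}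

lemma antiperiodic_of_odd_of_symmetric (hodd : f.Odd) (hsymm : ∀ x, f (c + x) = f (c - x)) :
    Function.Antiperiodic f (2 * c) := fun x => by
  rw [← hodd, show x + 2 * c = c + (c + x) by ring, hsymm]
  congr 1
  ring

variable [TopologicalSpace E] [ContinuousNeg E]

lemma continuousAt_zero_of_odd (hodd : f.Odd) (hright : ContinuousWithinAt f (Ici 0) 0) :
    ContinuousAt f 0 := by
  have hleft : ContinuousWithinAt (fun x => -f (-x)) (Iic 0) 0 :=
    (ContinuousWithinAt.comp (f := Neg.neg) (t := Ici 0) (by simpa using hright)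
      continuous_neg.continuousWithinAt fun x hx => by simpa using hx).neg
  simp only [hodd _, neg_neg] at hleft
  exact continuousAt_iff_continuous_left_right.2 ⟨hleft, hright⟩

lemma continuous_of_antiperiodic (hc : 0 < c) (hanti : Function.Antiperiodic f c)
    (hf : ∀ x ∈ Ico 0 c, ContinuousAt f x) : Continuous f := by
  have hperiodic : Function.Periodic (ContinuousAt f) c := fun x =>
    propext <| calc ContinuousAt f (x + c)
      _ ↔ ContinuousAt (fun y => f (y + c)) x :=
        ((Homeomorph.addRight c).comp_continuousAt_iff' f x).symm
      _ ↔ ContinuousAt (-f) x := by rw [hanti.funext]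
      _ ↔ ContinuousAt f x := (Homeomorph.neg E).comp_continuousAt_iff f x
  refine continuous_iff_continuousAt.2 fun x => ?_
  obtain ⟨y, hy, hxy⟩ := hperiodic.exists_mem_Ico₀ hc x
  exact hxy ▸ hf y hy

lemma continuous_of_odd_of_symmetric (hc : 0 < c) (hodd : f.Odd)
    (hsymm : ∀ x, f (c + x) = f (c - x)) (hright : ContinuousWithinAt f (Ici 0) 0)
    (hf : ContinuousOn f (Ioo 0 (2 * c))) : Continuous f := by
  refine continuous_of_antiperiodic (by positivity) (antiperiodic_of_odd_of_symmetric hodd hsymm)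
    fun x hx => ?_
  rcases hx.1.eq_or_lt with rfl | hpos
  · exact continuousAt_zero_of_odd hodd hright
  · exact hf.continuousAt (Ioo_mem_nhds hpos hx.2)

end Reflection

lemma exists_lipschitzOnWith_rpow_of_isCompact {q : ℝ} (hq : 1 ≤ q) {T : Set ℝ}
    (hT : IsCompact T) : ∃ A, LipschitzOnWith A (fun t : ℝ => t ^ q) T :=
  have hdiff : ContDiff ℝ 1 fun t : ℝ => t ^ q :=
    Real.contDiff_rpow_const_of_le (by simpa using hq)
  hdiff.locallyLipschitz.locallyLipschitzOn.exists_lipschitzOnWith_of_compact hT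

lemma continuousWithinAt_Ici_zero_of_eqOn_rpow {u : ℝ → ℝ} {r b : ℝ} (hr : 0 < r) (hb : 0 < b)
    (hu : EqOn u (fun x => x ^ r) (Ico 0 b)) : ContinuousWithinAt u (Ici 0) 0 :=
  (Real.continuous_rpow_const hr.le).continuousWithinAt.congr_of_eventuallyEq_of_mem
    (mem_of_superset (Ico_mem_nhdsGE hb) hu) self_mem_Ici

lemma setIntegral_div_rpow_abs_eq (ρ p : ℝ) (v : ℝ → ℝ) :
    ∫ y in {y : ℝ | ρ ≤ |y|}, v y / |y| ^ p =
      ∫ y, ({y | ρ ≤ |y|}.indicator fun y => |y| ^ (-p)) y • v y := by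
  rw [← integral_indicator (measurableSet_le measurable_const continuous_abs.measurable)]
  congr 1 with y
  simp only [indicator, Real.rpow_neg (abs_nonneg y), smul_eq_mul]
  split_ifs <;> ring

lemma comp_rpow_inv_eq_self {u : ℝ → ℝ} {r c t : ℝ} (hr : 0 < r) (hc : 0 ≤ c)
    (hu : EqOn u (fun x => x ^ r) (Icc 0 c)) (ht : t ∈ Icc 0 (c ^ r)) : u (t ^ r⁻¹) = t := by
  have hmem : t ^ r⁻¹ ∈ Icc 0 c :=
    ⟨Real.rpow_nonneg ht.1 _, (Real.rpow_inv_le_iff_of_pos ht.1 hc hr).2 ht.2⟩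
  exact (hu hmem).trans (Real.rpow_inv_rpow ht.1 hr.ne')

theorem stmt12_general (s r : ℝ) (hs : 0 < s) (hr0 : 0 < r) (hr1 : r ≤ 1) (u : ℝ → ℝ)
    (hu : AEStronglyMeasurable u) (hbdd : Bornology.IsBounded (range u))
    (hprofile : EqOn u (fun x => x ^ r) (Icc 0 (1 / 2))) (H : ℝ → ℝ)
    (hH : ∀ x : ℝ,
      H x = ∫ y in {y : ℝ | 1 / 2 ≤ |y|}, (u (x + y) - u x) / |y| ^ (1 + 2 * s)) :
    ∃ K : NNReal, LipschitzOnWith K (fun t : ℝ => H (t ^ (1 / r)))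
      (Set.Icc 0 ((2 : ℝ) ^ (-r))) := by
  have hkernel := IsLOneTranslationLipschitz.indicator_abs_rpow (ρ := 1 / 2) (p := 1 + 2 * s)
    (by norm_num) (by linarith)
  obtain ⟨M, hM⟩ := isBounded_iff_forall_norm_le.1 hbdd
  obtain ⟨A, hA⟩ := exists_lipschitzOnWith_rpow_of_isCompact ((one_le_inv₀ hr0).2 hr1)
    (isCompact_Icc (a := 0) (b := (1 / 2) ^ r))
  have hug : LipschitzOnWith 1 (fun t => u (t ^ r⁻¹)) (Icc 0 ((1 / 2) ^ r)) :=
    LipschitzOnWith.of_dist_le_mul fun t ht t' ht' => by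
      rw [comp_rpow_inv_eq_self hr0 one_half_pos.le hprofile ht,
        comp_rpow_inv_eq_self hr0 one_half_pos.le hprofile ht', NNReal.coe_one, one_mul]
  rw [Real.rpow_neg_eq_inv_rpow, ← one_div 2]
  simp only [hH, setIntegral_div_rpow_abs_eq, one_div r]
  exact ⟨_, hkernel.lipschitzOnWith_integral_smul_sub_comp hu (fun x => hM _ ⟨x, rfl⟩) hA hug⟩

theorem stmt12 (s β r : ℝ) (hs0 : 0 < s) (hs1 : s < 1) (hβ0 : 0 < β) (hβ1 : β < 1)
    (h2s : 2 * s < 1 - β) (hr : r = 2 * s / (1 - β))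
    (u : ℝ → ℝ)
    (hper : Function.Periodic u 8)
    (ha1 : ∀ x : ℝ, -1 < x → x < 0 → u x = -(|x| ^ r))
    (ha2 : ∀ x : ℝ, 0 ≤ x → x < 1 → u x = x ^ r)
    (hb1 : ContDiffOn ℝ (⊤ : ℕ∞) u (Set.Ioo (-4 : ℝ) 0))
    (hb2 : ContDiffOn ℝ (⊤ : ℕ∞) u (Set.Ioo (0 : ℝ) 4))
    (hc : StrictMonoOn u (Set.Ioo (0 : ℝ) 2))
    (hd1 : ∀ x : ℝ, u (-x) = -u x)
    (hd2 : ∀ x : ℝ, u (2 + x) = u (2 - x))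
    (he1 : sSup (deriv u '' Set.Ioo (1 : ℝ) 2) = deriv u 1)
    (he2 : sInf (deriv u '' Set.Ioo (0 : ℝ) 1) = deriv u 1)
    (hf : ∃ δ : ℝ, 0 < δ ∧ ∀ x ∈ Set.Ioo (2 - δ) (2 + δ), u x = -(x - 2) ^ 2 + u 2)
    (H : ℝ → ℝ)
    (hH : ∀ x : ℝ,
      H x = ∫ y in {y : ℝ | 1 / 2 ≤ |y|}, (u (x + y) - u x) / |y| ^ (1 + 2 * s)) :
    ∃ K : NNReal, LipschitzOnWith K (fun t : ℝ => H (t ^ (1 / r)))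
      (Set.Icc 0 ((2 : ℝ) ^ (-r))) := by
  have hr0 : 0 < r := hr ▸ div_pos (by linarith) (by linarith)
  have hr1 : r < 1 := hr ▸ (div_lt_one (by linarith)).2 h2s
  have hright : ContinuousWithinAt u (Ici 0) 0 :=
    continuousWithinAt_Ici_zero_of_eqOn_rpow hr0 one_pos fun x hx => ha2 x hx.1 hx.2
  have hcont : Continuous u := continuous_of_odd_of_symmetric two_pos hd1 hd2 hright
    (hb2.continuousOn.mono (Ioo_subset_Ioo_right (by norm_num)))
  exact stmt12_general s r hs0 hr0 hr1.le u hcont.aestronglyMeasurable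
    (hper.isBounded_of_continuous (by norm_num) hcont)
    (fun x hx => ha2 x hx.1 (by linarith [hx.2])) H hH
end
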